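/- arXiv:math/0303154 — 9 statements merged into one kernel-verified Lean document; each statement's English description precedes it below -/
import Mathlib

section
/- Let F = ∑_{n∈ℤ} f_{n+1/2}(q) t^{n+1/2} be a formal series with all coefficients f_{n+1/2} ∈ ℂ((q)), and suppose F satisfies F(qt) + q^{1/2} t F(t) = 0, i.e. q^n f_{n+1/2}(q) = − f_{n−1/2}(q) in ℂ((q)) for every n ∈ ℤ. Then f_{n+1/2}(q) = (−1)^n q^{−n(n+1)/2} f_{1/2}(q) for every n ∈ ℤ; that is, F = f(q) · ∑_{n∈ℤ} (−1)^n q^{−n(n+1)/2} t^{n+1/2} with f = f_{1/2} ∈ ℂ((q)). In particular, if every coefficient f_{n+1/2} lies in ℂ[[q]], then F = 0. (Lemma A.2 of the paper.) -/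
/-!
The theta series `∑ (-1)^n q^{-n(n+1)/2} t^{n+1/2}` solves the functional equation, and since `q` is
invertible in `R((q))` a solution is determined by its coefficient at `t^{1/2}`. The exponents
`-n(n+1)/2` tend to `-∞`, so a nonzero multiple of the theta series has coefficients of arbitrarily
negative order in `q`.
-/

open HahnSeries

theorem eq_of_forall_injective_apply_eq_sub_one {α : Type*} {T : ℤ → α → α}
    (hT : ∀ n, Function.Injective (T n)) {f g : ℤ → α} (hf : ∀ n, T n (f n) = f (n - 1))
    (hg : ∀ n, T n (g n) = g (n - 1)) (h₀ : f 0 = g 0) (n : ℤ) : f n = g n := by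
  induction n using Int.induction_on with
  | zero => exact h₀
  | succ k ih => exact hT (k + 1) (by rw [hf, hg, add_sub_cancel_right, ih])
  | pred k ih => rw [← hf, ← hg, ih]

theorem mul_add_one_ediv_two_eq_add (n : ℤ) :
    n * (n + 1) / 2 = (n - 1) * (n - 1 + 1) / 2 + n := by
  rw [← Int.add_mul_ediv_right _ _ two_ne_zero]
  congr 1
  ring

theorem exists_lt_mul_add_one_ediv_two (m : ℤ) : ∃ n : ℤ, m < n * (n + 1) / 2 := by
  refine ⟨|m| + 1, Int.lt_of_add_one_le ?_⟩
  rw [Int.le_ediv_iff_mul_le two_pos]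
  nlinarith [abs_nonneg m, le_abs_self m]

section Theta

variable {R : Type*} [Ring R]

theorem single_one_mul_injective (n : ℤ) :
    Function.Injective fun x : LaurentSeries R ↦ single n (1 : R) * x :=
  Function.LeftInverse.injective (g := fun x ↦ single (-n) (1 : R) * x) fun x ↦ by
    simp only [← mul_assoc, single_mul_single, neg_add_cancel, mul_one, single_zero_one, one_mul]

variable (R) in
/-- The coefficient `(-1)^n q^{-n(n+1)/2}` of `t^{n+1/2}` in the theta series. The sign is taken in
`Rˣ` so that negative `n` make sense over any ring. -/
noncomputable def thetaCoeff (n : ℤ) : LaurentSeries R :=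
  single (-(n * (n + 1) / 2)) (((-1 : Rˣ) ^ n : Rˣ) : R)

theorem thetaCoeff_zero : thetaCoeff R 0 = 1 := by
  simp [thetaCoeff]

theorem single_one_mul_thetaCoeff (n : ℤ) :
    single n (1 : R) * thetaCoeff R n = -thetaCoeff R (n - 1) := by
  have exponent : n + -(n * (n + 1) / 2) = -((n - 1) * (n - 1 + 1) / 2) := by
    rw [mul_add_one_ediv_two_eq_add n]
    ring
  have sign : (-1 : Rˣ) ^ n = -(-1) ^ (n - 1) := by
    rw [zpow_sub_one, inv_neg_one, mul_neg_one, neg_neg]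
  rw [thetaCoeff, thetaCoeff, single_mul_single, one_mul, exponent, sign, Units.val_neg, single_neg]

theorem eq_thetaCoeff_mul {f : ℤ → LaurentSeries R}
    (h : ∀ n : ℤ, single n (1 : R) * f n = -f (n - 1)) (n : ℤ) :
    f n = thetaCoeff R n * f 0 :=
  eq_of_forall_injective_apply_eq_sub_one (T := fun n x ↦ -(single n (1 : R) * x))
    (g := fun n ↦ thetaCoeff R n * f 0)
    (fun n ↦ neg_injective.comp (single_one_mul_injective n))
    (fun n ↦ by rw [h, neg_neg])
    (fun n ↦ by rw [← mul_assoc, single_one_mul_thetaCoeff, neg_mul, neg_neg])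
    (by rw [thetaCoeff_zero, one_mul]) n

theorem eq_zero_of_coeff_thetaCoeff_mul_eq_zero {x : LaurentSeries R} {N : ℤ}
    (hx : ∀ n : ℤ, ∀ k < N, (thetaCoeff R n * x).coeff k = 0) : x = 0 := by
  ext k
  obtain ⟨n, hn⟩ := exists_lt_mul_add_one_ediv_two (k - N)
  have hcoeff := hx n (k + -(n * (n + 1) / 2)) (by lia)
  rwa [thetaCoeff, coeff_single_mul_add, Units.mul_right_eq_zero] at hcoeff

theorem stmt1_general (f : ℤ → LaurentSeries R)
    (h : ∀ n : ℤ, single n (1 : R) * f n = -f (n - 1)) :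
    (∀ n : ℤ, f n = single (-(n * (n + 1) / 2)) (((-1 : Rˣ) ^ n : Rˣ) : R) * f 0) ∧
    ((∃ N : ℤ, ∀ n : ℤ, ∀ k < N, (f n).coeff k = 0) → ∀ n : ℤ, f n = 0) := by
  refine ⟨eq_thetaCoeff_mul h, fun ⟨N, hN⟩ n ↦ ?_⟩
  have h₀ : f 0 = 0 := eq_zero_of_coeff_thetaCoeff_mul_eq_zero fun n k hk ↦ by
    rw [← eq_thetaCoeff_mul h, hN n k hk]
  rw [eq_thetaCoeff_mul h, h₀, mul_zero]

end Theta

/-- **Lemma A.2.**  A formal series `F = ∑_{n ∈ ℤ} f_{n+1/2}(q) t^{n+1/2}` (encoded by the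
family of coefficients `f n := f_{n+1/2} ∈ ℂ((q))`) satisfying
`F(qt) + q^{1/2} t F(t) = 0`, i.e. `q^n f_{n+1/2} = - f_{n-1/2}` for all `n ∈ ℤ`,
has `f_{n+1/2} = (-1)^n q^{-n(n+1)/2} f_{1/2}` for every `n`; in particular if all the
coefficients lie in `ℂ[[q]]` then `F = 0`. -/
theorem stmt1 (f : ℤ → LaurentSeries ℂ)
    (h : ∀ n : ℤ, (HahnSeries.single n (1 : ℂ) : LaurentSeries ℂ) * f n = - f (n - 1)) :
    (∀ n : ℤ,
        f n = (HahnSeries.single (-(n * (n + 1) / 2)) ((-1 : ℂ) ^ n) : LaurentSeries ℂ) * f 0) ∧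
    ((∀ n : ℤ, ∃ g : PowerSeries ℂ, f n = (g : LaurentSeries ℂ)) → ∀ n : ℤ, f n = 0) := by
  refine ⟨by simpa using (stmt1_general f h).1, fun hg ↦ (stmt1_general f h).2 ⟨0, fun n k hk ↦ ?_⟩⟩
  obtain ⟨g, hgn⟩ := hg n
  rw [hgn, PowerSeries.coeff_coe, if_pos hk]
end

section
/- Let F = ∑_{m,l∈ℤ} a_{m,l}(q) t₁^{m+1/2} t₂^{l+1/2} be a formal series with all coefficients a_{m,l} ∈ ℂ((q)), and suppose F satisfies F(qt₁, t₂) + q^{1/2} t₁ t₂ F(t₁, t₂) = 0, i.e. q^m a_{m,l}(q) = − a_{m−1,l−1}(q) in ℂ((q)) for all m, l ∈ ℤ, together with the symmetry a_{m,l} = a_{l,m} for all m, l. Then a_{m,l} = 0 whenever m ≠ l, and a_{n,n}(q) = (−1)^n q^{−n(n+1)/2} a_{0,0}(q) for every n ∈ ℤ; that is, F = f(q) · ∑_{n∈ℤ} (−1)^n q^{−n(n+1)/2} (t₁t₂)^{n+1/2} with f = a_{0,0} ∈ ℂ((q)). In particular, if every coefficient a_{m,l} lies in ℂ[[q]], then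 F = 0. (Lemma A.4 of the paper.) -/
/-!
Multiplying the coefficient of `t₁^{n+1/2} t₂^{n+d+1/2}` by `(-1)^n q^{n(n+1)/2}` turns the
recursion along a diagonal into periodicity in `n`, so a diagonal is determined by its entry at
`n = 0`. If all its entries are power series, then that entry is divisible by `q^{n(n+1)/2}` for
every `n`, hence vanishes. Off the main diagonal, symmetry makes `q^m a_{m,l}` and `q^l a_{m,l}`
equal, and two different shifts of a nonzero Laurent series have different orders.
-/

theorem eq_zero_of_single_mul_eq_single_mul {Γ R : Type*} [AddCommMonoid Γ] [LinearOrder Γ]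
    [IsOrderedCancelAddMonoid Γ] [NonAssocSemiring R] {i j : Γ} (hij : i ≠ j) {x : HahnSeries Γ R}
    (hx : HahnSeries.single i 1 * x = HahnSeries.single j 1 * x) : x = 0 := by
  by_contra hx0
  have horder := congrArg HahnSeries.order hx
  rw [HahnSeries.order_single_mul_of_isRegular isRegular_one hx0,
    HahnSeries.order_single_mul_of_isRegular isRegular_one hx0] at horder
  exact hij (add_right_cancel horder)

theorem le_triangular (n : ℤ) : n ≤ n * (n + 1) / 2 := by
  rw [Int.le_ediv_iff_mul_le two_pos]
  nlinarith [Int.le_self_sq n]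

theorem triangular_add_one (n : ℤ) :
    (n + 1) * (n + 1 + 1) / 2 = n * (n + 1) / 2 + (n + 1) := by
  rw [← Int.add_mul_ediv_right _ _ two_ne_zero]
  ring_nf

theorem coeff_single_mul_coe_powerSeries_of_lt {R : Type*} [Semiring R] {k m : ℤ} (hk : k < m)
    (r : R) (g : PowerSeries R) :
    (HahnSeries.single m r * (g : LaurentSeries R)).coeff k = 0 := by
  rw [HahnSeries.coeff_single_mul, PowerSeries.coeff_coe, if_pos (sub_neg.mpr hk), mul_zero]

/-- The recursion `q^n b_n = -b_{n-1}` that the functional equation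
`F(qt₁, t₂) + q^{1/2} t₁ t₂ F(t₁, t₂) = 0` imposes on the coefficients of `F` along each diagonal;
`q^n` is encoded as `HahnSeries.single n 1`. -/
def IsThetaSequence {R : Type*} [Ring R] (b : ℤ → LaurentSeries R) : Prop :=
  ∀ n, HahnSeries.single n (1 : R) * b n = -b (n - 1)

namespace IsThetaSequence

variable {R : Type*} [Ring R] {b : ℤ → LaurentSeries R}

theorem periodic_single_triangular_mul (hb : IsThetaSequence b) :
    Function.Periodic
      (fun n ↦ HahnSeries.single (n * (n + 1) / 2) ((n.negOnePow : ℤ) : R) * b n) 1 := by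
  intro n
  calc HahnSeries.single ((n + 1) * (n + 1 + 1) / 2) (((n + 1).negOnePow : ℤ) : R) * b (n + 1)
      = -HahnSeries.single (n * (n + 1) / 2) ((n.negOnePow : ℤ) : R) *
          (HahnSeries.single (n + 1) (1 : R) * b (n + 1)) := by
        rw [← mul_assoc, ← HahnSeries.single_neg, HahnSeries.single_mul_single, mul_one,
          triangular_add_one, Int.negOnePow_succ, Units.val_neg, Int.cast_neg]
    _ = HahnSeries.single (n * (n + 1) / 2) ((n.negOnePow : ℤ) : R) * b n := by
        rw [hb, add_sub_cancel_right, neg_mul_neg]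

theorem single_triangular_mul_eq (hb : IsThetaSequence b) (n : ℤ) :
    HahnSeries.single (n * (n + 1) / 2) ((n.negOnePow : ℤ) : R) * b n = b 0 := by
  simpa using hb.periodic_single_triangular_mul.int_mul_eq n

theorem eq_single_neg_triangular_mul (hb : IsThetaSequence b) (n : ℤ) :
    b n = HahnSeries.single (-(n * (n + 1) / 2)) ((n.negOnePow : ℤ) : R) * b 0 := by
  rw [← hb.single_triangular_mul_eq n, ← mul_assoc, HahnSeries.single_mul_single, neg_add_cancel,
    ← Int.cast_mul, Int.units_coe_mul_self, Int.cast_one, HahnSeries.single_zero_one, one_mul]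

theorem eq_zero_of_forall_coe_powerSeries (hb : IsThetaSequence b)
    (hpow : ∀ n, ∃ g : PowerSeries R, b n = (g : LaurentSeries R)) (n : ℤ) : b n = 0 := by
  have hb0 : b 0 = 0 := by
    ext k
    obtain ⟨g, hg⟩ := hpow (k + 1)
    rw [← hb.single_triangular_mul_eq (k + 1), hg]
    exact coeff_single_mul_coe_powerSeries_of_lt (le_triangular (k + 1)) _ g
  rw [hb.eq_single_neg_triangular_mul, hb0, mul_zero]

end IsThetaSequence

theorem stmt3_general {R : Type*} [Ring R] (a : ℤ → ℤ → LaurentSeries R)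
    (h : ∀ m l : ℤ, HahnSeries.single m (1 : R) * a m l = -a (m - 1) (l - 1)) :
    ((∀ m l : ℤ, a m l = a l m) → ∀ m l : ℤ, m ≠ l → a m l = 0) ∧
    (∀ n d : ℤ, a n (n + d) =
      HahnSeries.single (-(n * (n + 1) / 2)) ((n.negOnePow : ℤ) : R) * a 0 d) ∧
    ((∀ m l : ℤ, ∃ g : PowerSeries R, a m l = (g : LaurentSeries R)) →
      ∀ m l : ℤ, a m l = 0) := by
  have hdiag (d : ℤ) : IsThetaSequence fun n ↦ a n (n + d) := by
    intro n
    rw [h, add_sub_right_comm]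
  refine ⟨fun hsym m l hml ↦ ?_, fun n d ↦ ?_, fun hpow m l ↦ ?_⟩
  · have hshift : HahnSeries.single m (1 : R) * a m l = HahnSeries.single l 1 * a m l := by
      rw [h, hsym m l, h, hsym (m - 1)]
    exact eq_zero_of_single_mul_eq_single_mul hml hshift
  · simpa only [zero_add] using (hdiag d).eq_single_neg_triangular_mul n
  · simpa only [add_sub_cancel] using
      (hdiag (l - m)).eq_zero_of_forall_coe_powerSeries (fun n ↦ hpow n _) m

/-- **Lemma A.4.**  A formal series `F = ∑_{m,l ∈ ℤ} a_{m,l}(q) t₁^{m+1/2} t₂^{l+1/2}` with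
coefficients `a_{m,l} ∈ ℂ((q))` satisfying `F(qt₁,t₂) + q^{1/2} t₁ t₂ F(t₁,t₂) = 0`
(coefficientwise: `q^m a_{m,l} = - a_{m-1,l-1}`) together with the symmetry
`a_{m,l} = a_{l,m}`, satisfies `a_{m,l} = 0` for `m ≠ l` and
`a_{n,n} = (-1)^n q^{-n(n+1)/2} a_{0,0}`; in particular if all coefficients lie in
`ℂ[[q]]` then `F = 0`. -/
theorem stmt3 (a : ℤ → ℤ → LaurentSeries ℂ)
    (h : ∀ m l : ℤ,
      (HahnSeries.single m (1 : ℂ) : LaurentSeries ℂ) * a m l = - a (m - 1) (l - 1))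
    (hsym : ∀ m l : ℤ, a m l = a l m) :
    (∀ m l : ℤ, m ≠ l → a m l = 0) ∧
    (∀ n : ℤ,
      a n n = (HahnSeries.single (-(n * (n + 1) / 2)) ((-1 : ℂ) ^ n) : LaurentSeries ℂ) * a 0 0) ∧
    ((∀ m l : ℤ, ∃ g : PowerSeries ℂ, a m l = (g : LaurentSeries ℂ)) → ∀ m l : ℤ, a m l = 0) := by
  obtain ⟨hoff, hdiag, hzero⟩ := stmt3_general a h
  exact ⟨hoff hsym, fun n ↦ by simpa only [Int.cast_negOnePow, add_zero] using hdiag n 0, hzero⟩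
end

section
/- Let k ≥ 1 be an integer and q ∈ ℂ with 0 < |q| < 1. Then the incomplete theta function A_k(q) = ∑_{m=0}^∞ (−1)^m q^{(m+1−2k)(m+2)/2} (an absolutely convergent series of complex numbers) satisfies A_k(q) = q^{−k} + ∑_{m=0}^∞ (−1)^{m+1} q^{m(m+2k+1)/2}, the series on the right also converging absolutely. In particular A_k(q) − q^{−k} extends to a function of q holomorphic on the open unit disc. -/
/-
Write `F_k(q) = ∑_{n ≥ 0} (-1)^n q^{n(n+2k+1)/2}`, for any integer `k`. The series `A_k` is, term
by term, `-q^{-k}` times `F_{-k}` without its constant term `1`. So `A_k = q^{-k} - q^{-k} F_{-k}`,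
and the identity to prove is the functional equation `F_k = q^{-k} F_{-k}`. Exchanging `k` and `-k`,
we may take `k = -j ≤ 0`. The exponent `n(n-2j+1)/2` is invariant under `n ↦ 2j-1-n`, which
reverses the parity of `n`, so the first `2j` terms of `F_{-j}` cancel in pairs; the terms after
them are `q^j` times those of `F_j`. For `k ≥ 0` the exponent of the `n`-th term of `F_k` is at
least `n`, and comparison with a geometric series gives convergence and holomorphy on the unit disc;
the functional equation carries this over to `k < 0`.
-/

section Field

variable {K : Type*} [Field K]

/-- The `n`-th term `(-1)^n q^{n(n+2k+1)/2}` of the partial theta series. Since `n(n+2k+1)` is even,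
the integer division is exact. -/
def partialThetaTerm (k : ℤ) (q : K) (n : ℕ) : K :=
  (-1) ^ n * q ^ ((n : ℤ) * (n + 2 * k + 1) / 2)

lemma partialThetaTerm_zero (k : ℤ) (q : K) : partialThetaTerm k q 0 = 1 := by
  simp [partialThetaTerm]

lemma partialThetaTerm_neg_add_two_mul {q : K} (hq : q ≠ 0) (j n : ℕ) :
    partialThetaTerm (-j) q (n + 2 * j) = q ^ j * partialThetaTerm j q n := by
  have exponent_eq : ((n + 2 * j : ℕ) : ℤ) * ((n + 2 * j : ℕ) + 2 * (-j) + 1) / 2 =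
      n * (n + 2 * j + 1) / 2 + j := by
    rw [← Int.add_mul_ediv_right _ _ two_ne_zero]
    push_cast
    ring_nf
  have sign_eq : (-1 : K) ^ (n + 2 * j) = (-1) ^ n := by simp [pow_add, pow_mul]
  rw [partialThetaTerm, partialThetaTerm, exponent_eq, sign_eq, zpow_add₀ hq, zpow_natCast]
  ring

lemma partialThetaTerm_neg_add_reflect (q : K) {j n : ℕ} (hn : n < 2 * j) :
    partialThetaTerm (-j) q n + partialThetaTerm (-j) q (2 * j - 1 - n) = 0 := by
  obtain ⟨m, hm⟩ : ∃ m, n + m + 1 = 2 * j := ⟨2 * j - 1 - n, by lia⟩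
  have hj : 2 * (j : ℤ) = n + m + 1 := by exact_mod_cast hm.symm
  have sign_eq : (-1 : K) ^ m = -(-1) ^ n := by
    rcases Nat.even_or_odd n with h | h
    · rw [h.neg_one_pow, Odd.neg_one_pow (by grind)]
    · rw [h.neg_one_pow, Even.neg_one_pow (by grind), neg_neg]
  have exponent_eq : (m : ℤ) * (m + 2 * (-j) + 1) = n * (n + 2 * (-j) + 1) := by
    linear_combination (n - m : ℤ) * hj
  rw [show 2 * j - 1 - n = m by lia, partialThetaTerm, partialThetaTerm, sign_eq, exponent_eq]
  ring

lemma sum_range_two_mul_partialThetaTerm_neg (q : K) (j : ℕ) :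
    ∑ n ∈ Finset.range (2 * j), partialThetaTerm (-j) q n = 0 :=
  Finset.sum_involution (fun n _ ↦ 2 * j - 1 - n)
    (fun _ hn ↦ partialThetaTerm_neg_add_reflect q (Finset.mem_range.1 hn))
    (by grind) (by grind) (by grind)

lemma neg_one_pow_succ_mul_zpow_eq_neg_partialThetaTerm (k : ℤ) (q : K) (m : ℕ) :
    (-1) ^ (m + 1) * q ^ ((m : ℤ) * (m + 2 * k + 1) / 2) = -partialThetaTerm k q m := by
  rw [partialThetaTerm, pow_succ, mul_neg_one, neg_mul]

lemma neg_one_pow_mul_zpow_eq_neg_zpow_mul_partialThetaTerm {q : K} (hq : q ≠ 0) (k : ℤ) (m : ℕ) :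
    (-1) ^ m * q ^ (((m : ℤ) + 1 - 2 * k) * (m + 2) / 2) =
      -q ^ (-k) * partialThetaTerm (-k) q (m + 1) := by
  have exponent_eq : ((m : ℤ) + 1 - 2 * k) * (m + 2) / 2 =
      ((m + 1 : ℕ) : ℤ) * ((m + 1 : ℕ) + 2 * (-k) + 1) / 2 + -k := by
    rw [← Int.add_mul_ediv_right _ _ two_ne_zero]
    push_cast
    ring_nf
  rw [partialThetaTerm, exponent_eq, zpow_add₀ hq]
  ring

end Field

section NormedField

variable {𝕜 : Type*} [NormedField 𝕜]

lemma norm_partialThetaTerm_natCast_le {q : 𝕜} (hq : ‖q‖ ≤ 1) (j n : ℕ) :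
    ‖partialThetaTerm j q n‖ ≤ ‖q‖ ^ n := by
  have le_exponent : n ≤ n * (n + 2 * j + 1) / 2 := by
    rw [Nat.le_div_iff_mul_le two_pos]
    nlinarith [Nat.le_mul_self n]
  calc ‖partialThetaTerm j q n‖ = ‖q‖ ^ (n * (n + 2 * j + 1) / 2) := by
        simp only [partialThetaTerm, norm_mul, norm_pow, norm_neg, norm_one, one_pow, one_mul]
        rw [← norm_pow, ← zpow_natCast]
        norm_cast
    _ ≤ ‖q‖ ^ n := pow_le_pow_of_le_one (norm_nonneg q) hq le_exponent

lemma summable_norm_partialThetaTerm {q : 𝕜} (hq₀ : q ≠ 0) (hq : ‖q‖ < 1) (k : ℤ) :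
    Summable fun n ↦ ‖partialThetaTerm k q n‖ := by
  have summable_natCast (j : ℕ) : Summable fun n ↦ ‖partialThetaTerm j q n‖ :=
    .of_nonneg_of_le (fun _ ↦ norm_nonneg _) (norm_partialThetaTerm_natCast_le hq.le j)
      (summable_geometric_of_lt_one (norm_nonneg q) hq)
  obtain ⟨j, rfl | rfl⟩ := k.eq_nat_or_neg
  · exact summable_natCast j
  · rw [← summable_nat_add_iff (2 * j)]
    simp only [partialThetaTerm_neg_add_two_mul hq₀, norm_mul]
    exact (summable_natCast j).mul_left _

/-- The partial theta function `F_k(q) = ∑_{n ≥ 0} (-1)^n q^{n(n+2k+1)/2}`, through which the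
incomplete theta function is expressed as `A_k(q) = q^{-k} - F_k(q)`. It takes the value `0` where
the series diverges. -/
noncomputable def partialTheta (k : ℤ) (q : 𝕜) : 𝕜 :=
  ∑' n, partialThetaTerm k q n

variable [CompleteSpace 𝕜]

lemma partialTheta_neg_natCast {q : 𝕜} (hq₀ : q ≠ 0) (hq : ‖q‖ < 1) (j : ℕ) :
    partialTheta (-j) q = q ^ j * partialTheta j q := by
  have hsum := (summable_norm_partialThetaTerm hq₀ hq (-j)).of_norm
  rw [partialTheta, ← hsum.sum_add_tsum_nat_add (2 * j), sum_range_two_mul_partialThetaTerm_neg,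
    zero_add]
  simp only [partialThetaTerm_neg_add_two_mul hq₀, tsum_mul_left, partialTheta]

lemma partialTheta_eq_zpow_neg_mul {q : 𝕜} (hq₀ : q ≠ 0) (hq : ‖q‖ < 1) (k : ℤ) :
    partialTheta k q = q ^ (-k) * partialTheta (-k) q := by
  obtain ⟨j, rfl | rfl⟩ := k.eq_nat_or_neg
  · rw [partialTheta_neg_natCast hq₀ hq, zpow_neg, zpow_natCast,
      inv_mul_cancel_left₀ (pow_ne_zero j hq₀)]
  · rw [neg_neg, zpow_natCast, partialTheta_neg_natCast hq₀ hq]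

lemma tsum_neg_one_pow_mul_zpow_eq_zpow_sub_partialTheta {q : 𝕜} (hq₀ : q ≠ 0) (hq : ‖q‖ < 1)
    (k : ℤ) :
    ∑' m : ℕ, (-1) ^ m * q ^ (((m : ℤ) + 1 - 2 * k) * (m + 2) / 2) =
      q ^ (-k) - partialTheta k q := by
  have partialTheta_neg_eq :
      partialTheta (-k) q = 1 + ∑' m, partialThetaTerm (-k) q (m + 1) := by
    rw [partialTheta, (summable_norm_partialThetaTerm hq₀ hq (-k)).of_norm.tsum_eq_zero_add,
      partialThetaTerm_zero]
  simp only [neg_one_pow_mul_zpow_eq_neg_zpow_mul_partialThetaTerm hq₀, tsum_mul_left]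
  rw [partialTheta_eq_zpow_neg_mul hq₀ hq, partialTheta_neg_eq]
  ring

end NormedField

lemma differentiableOn_partialTheta_natCast (j : ℕ) :
    DifferentiableOn ℂ (partialTheta j) (Metric.ball (0 : ℂ) 1) := by
  intro q hq
  obtain ⟨r, hqr, hr⟩ := exists_between (mem_ball_zero_iff.1 hq)
  have differentiable_term (n : ℕ) : Differentiable ℂ fun w : ℂ ↦ partialThetaTerm j w n :=
    fun _ ↦ (differentiableAt_zpow.2 (.inr (by positivity))).const_mul _
  have term_le (n : ℕ) (w : ℂ) (hw : w ∈ Metric.ball 0 r) : ‖partialThetaTerm j w n‖ ≤ r ^ n := by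
    have hwr : ‖w‖ ≤ r := (mem_ball_zero_iff.1 hw).le
    exact (norm_partialThetaTerm_natCast_le (hwr.trans hr.le) j n).trans (by gcongr)
  have differentiableOn_ball : DifferentiableOn ℂ (partialTheta j) (Metric.ball (0 : ℂ) r) :=
    Complex.differentiableOn_tsum_of_summable_norm
      (summable_geometric_of_lt_one ((norm_nonneg q).trans hqr.le) hr)
      (fun n ↦ (differentiable_term n).differentiableOn) Metric.isOpen_ball term_le
  exact (differentiableOn_ball.differentiableAt
    (Metric.isOpen_ball.mem_nhds (mem_ball_zero_iff.2 hqr))).differentiableWithinAt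

lemma exists_differentiableOn_eq_partialTheta (k : ℤ) :
    ∃ f : ℂ → ℂ, DifferentiableOn ℂ f (Metric.ball 0 1) ∧
      ∀ q : ℂ, q ≠ 0 → ‖q‖ < 1 → partialTheta k q = f q := by
  obtain ⟨j, rfl | rfl⟩ := k.eq_nat_or_neg
  · exact ⟨_, differentiableOn_partialTheta_natCast j, fun _ _ _ ↦ rfl⟩
  · exact ⟨fun q ↦ q ^ j * partialTheta j q,
      (differentiableOn_pow j).mul (differentiableOn_partialTheta_natCast j),
      fun _ hq₀ hq ↦ partialTheta_neg_natCast hq₀ hq j⟩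

theorem stmt6_general (k : ℤ) :
    (∀ q : ℂ, 0 < ‖q‖ → ‖q‖ < 1 →
      (Summable fun m : ℕ =>
        ‖(-1 : ℂ) ^ m * q ^ ((((m : ℤ) + 1 - 2 * k) * ((m : ℤ) + 2)) / 2)‖) ∧
      (Summable fun m : ℕ =>
        ‖(-1 : ℂ) ^ (m + 1) * q ^ (((m : ℤ) * ((m : ℤ) + 2 * k + 1)) / 2)‖) ∧
      (∑' m : ℕ, (-1 : ℂ) ^ m * q ^ ((((m : ℤ) + 1 - 2 * k) * ((m : ℤ) + 2)) / 2))
        = q ^ (-k) +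
          ∑' m : ℕ, (-1 : ℂ) ^ (m + 1) * q ^ (((m : ℤ) * ((m : ℤ) + 2 * k + 1)) / 2)) ∧
    ∃ g : ℂ → ℂ, DifferentiableOn ℂ g (Metric.ball (0 : ℂ) 1) ∧
      ∀ q : ℂ, 0 < ‖q‖ → ‖q‖ < 1 →
        (∑' m : ℕ, (-1 : ℂ) ^ m * q ^ ((((m : ℤ) + 1 - 2 * k) * ((m : ℤ) + 2)) / 2))
          - q ^ (-k) = g q := by
  refine ⟨fun q hq₀ hq ↦ ⟨?_, ?_, ?_⟩, ?_⟩
  · simp only [neg_one_pow_mul_zpow_eq_neg_zpow_mul_partialThetaTerm (norm_pos_iff.1 hq₀), norm_mul]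
    exact ((summable_nat_add_iff 1).2
      (summable_norm_partialThetaTerm (norm_pos_iff.1 hq₀) hq (-k))).mul_left _
  · simp only [neg_one_pow_succ_mul_zpow_eq_neg_partialThetaTerm, norm_neg]
    exact summable_norm_partialThetaTerm (norm_pos_iff.1 hq₀) hq k
  · simp only [neg_one_pow_succ_mul_zpow_eq_neg_partialThetaTerm, tsum_neg, ← sub_eq_add_neg]
    exact tsum_neg_one_pow_mul_zpow_eq_zpow_sub_partialTheta (norm_pos_iff.1 hq₀) hq k
  · obtain ⟨f, hf, partialTheta_eq⟩ := exists_differentiableOn_eq_partialTheta k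
    refine ⟨-f, hf.neg, fun q hq₀ hq ↦ ?_⟩
    rw [tsum_neg_one_pow_mul_zpow_eq_zpow_sub_partialTheta (norm_pos_iff.1 hq₀) hq,
      partialTheta_eq q (norm_pos_iff.1 hq₀) hq, sub_sub_cancel_left, Pi.neg_apply]

/-- **Incomplete theta functions.**  For an integer `k ≥ 1` and `q ∈ ℂ` with `0 < |q| < 1`,
the series `A_k(q) = ∑_{m≥0} (-1)^m q^{(m+1-2k)(m+2)/2}` converges absolutely and
`A_k(q) = q^{-k} + ∑_{m≥0} (-1)^{m+1} q^{m(m+2k+1)/2}`, the right-hand series also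
converging absolutely; in particular `A_k(q) - q^{-k}` extends to a holomorphic function
on the open unit disc. -/
theorem stmt6 (k : ℕ) (hk : 1 ≤ k) :
    (∀ q : ℂ, 0 < ‖q‖ → ‖q‖ < 1 →
      (Summable fun m : ℕ =>
        ‖(-1 : ℂ) ^ m * q ^ ((((m : ℤ) + 1 - 2 * k) * ((m : ℤ) + 2)) / 2)‖) ∧
      (Summable fun m : ℕ =>
        ‖(-1 : ℂ) ^ (m + 1) * q ^ (((m : ℤ) * ((m : ℤ) + 2 * k + 1)) / 2)‖) ∧
      (∑' m : ℕ, (-1 : ℂ) ^ m * q ^ ((((m : ℤ) + 1 - 2 * k) * ((m : ℤ) + 2)) / 2))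
        = q ^ (-(k : ℤ)) +
          ∑' m : ℕ, (-1 : ℂ) ^ (m + 1) * q ^ (((m : ℤ) * ((m : ℤ) + 2 * k + 1)) / 2)) ∧
    ∃ g : ℂ → ℂ, DifferentiableOn ℂ g (Metric.ball (0 : ℂ) 1) ∧
      ∀ q : ℂ, 0 < ‖q‖ → ‖q‖ < 1 →
        (∑' m : ℕ, (-1 : ℂ) ^ m * q ^ ((((m : ℤ) + 1 - 2 * k) * ((m : ℤ) + 2)) / 2))
          - q ^ (-(k : ℤ)) = g q :=
  stmt6_general k
end

section
/- Let q, t ∈ ℂ with 0 < |q| < 1 and 1 < |t| < 1/|q|. Then ∑_{m=0}^∞ (−1)^m q^{m(m+1)/2} (1 − q^{2m+1}) / ( (1 − t^{−1} q^m)(1 − t q^{m+1}) ) = (q)_∞² / ( (1 − t^{−1}) · ∏_{i=1}^∞ (1 − q^i t)(1 − q^i t^{−1}) ) = t/Θ(t), all series and products converging absolutely. Equivalently, the reciprocal 1/θ₁₁(t) of the theta function θ₁₁(t) = t^{−1/2}Θ(t) equals t^{−1/2} times the left-hand sum. -/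
/-- `(q)_∞ = ∏_{i=1}^∞ (1 - q^i)`. -/
noncomputable def Qinf (q : ℂ) : ℂ := ∏' i : ℕ, (1 - q ^ (i + 1))

/-- `Θ(u) = (u-1) ∏_{i=1}^∞ (1-q^i u)(1-q^i u⁻¹) / (q)_∞²`; in terms of the paper's theta
function, `θ₁₁(u) = u^{-1/2} Θ(u)`. -/
noncomputable def Theta (q u : ℂ) : ℂ :=
  (u - 1) * (∏' i : ℕ, (1 - q ^ (i + 1) * u) * (1 - q ^ (i + 1) * u⁻¹)) / (Qinf q) ^ 2

/-!
Put `s = t⁻¹ + t q` and `P_m = 1 - s q^m + q^(2m+1) = (1 - t⁻¹ q^m) (1 - t q^(m+1))`. As a function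
of `s`, the reciprocal of `P_0 ⋯ P_N` has simple poles, and its partial fraction expansion is
`1 / (P_0 ⋯ P_N) = ∑_{m ≤ N} (-1)^m q^(m(m+1)/2) (1 - q^(2m+1)) / (P_m (q)_{N-m} (q)_{N+m+1})`.
The expansion is proved by induction on `N`: since
`P_{N+1} = (1 - q^(N+1-m)) (1 - q^(N+m+2)) + q^(N+1-m) P_m`,
multiplying the expansion for `N + 1` by `P_{N+1}` gives the one for `N` plus a sum free of `s`,
which telescopes to zero. As `N → ∞`, Tannery's theorem turns the right-hand side into the series
divided by `(q)_∞²`, while the left-hand side tends to the reciprocal of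
`∏_{m ≥ 0} P_m = (1 - t⁻¹) ∏_{i ≥ 1} (1 - q^i t) (1 - q^i t⁻¹)`.
-/

open Filter Finset Topology

lemma choose_two_succ (n : ℕ) : (n + 1).choose 2 = n + n.choose 2 := by
  rw [Nat.choose_succ_succ', Nat.choose_one_right]

section Field

variable {K : Type*} [Field K] {q : K}

/-- The finite `q`-Pochhammer symbol `(q)_n = (1 - q) (1 - q²) ⋯ (1 - qⁿ)`. -/
def qPochhammer (q : K) (n : ℕ) : K := ∏ i ∈ range n, (1 - q ^ (i + 1))

/-- The factor `1 - s qᵐ + q²ᵐ⁺¹` which, for `s = t⁻¹ + t q`, is `(1 - t⁻¹ qᵐ) (1 - t qᵐ⁺¹)`. In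
the variable `s` it is linear, with its zero at `q⁻ᵐ + qᵐ⁺¹`. -/
def poleFactor (q s : K) (m : ℕ) : K := 1 + (q ^ (2 * m + 1) - s * q ^ m)

/-- The number `e_m = (-1)ᵐ q^{m(m-1)/2} (1 - q²ᵐ⁺¹)`. The numerators of the partial fraction
expansion are the `qᵐ e_m`; leaving out `qᵐ` makes the `e_m` the terms of a telescoping sum. -/
def poleCoeff (q : K) (m : ℕ) : K := (-1) ^ m * q ^ m.choose 2 * (1 - q ^ (2 * m + 1))

/-- The product `(q)_{N-m} (q)_{N+m+1}`: the dependence on `N` of the partial fraction with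
denominator `poleFactor q s m`. As `N - m` is truncated, it is meaningful for `m ≤ N` only. -/
def poleDenom (q : K) (N m : ℕ) : K := qPochhammer q (N - m) * qPochhammer q (N + m + 1)

lemma qPochhammer_succ (q : K) (n : ℕ) :
    qPochhammer q (n + 1) = qPochhammer q n * (1 - q ^ (n + 1)) :=
  prod_range_succ _ _

lemma qPochhammer_ne_zero (hq : ∀ n : ℕ, q ^ (n + 1) ≠ 1) (n : ℕ) : qPochhammer q n ≠ 0 :=
  prod_ne_zero_iff.mpr fun i _ ↦ sub_ne_zero.mpr (hq i).symm

lemma poleDenom_ne_zero (hq : ∀ n : ℕ, q ^ (n + 1) ≠ 1) (N m : ℕ) : poleDenom q N m ≠ 0 :=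
  mul_ne_zero (qPochhammer_ne_zero hq _) (qPochhammer_ne_zero hq _)

lemma poleDenom_succ (q : K) {N m : ℕ} (hm : m ≤ N) :
    poleDenom q (N + 1) m =
      poleDenom q N m * ((1 - q ^ (N + 1 - m)) * (1 - q ^ (N + m + 2))) := by
  rw [poleDenom, Nat.sub_add_comm hm, show N + 1 + m + 1 = N + m + 1 + 1 by lia,
    qPochhammer_succ, qPochhammer_succ, poleDenom]
  ring

lemma poleFactor_eq_add_pow_mul_poleFactor (q s : K) {N m : ℕ} (hm : m ≤ N) :
    poleFactor q s N =
      (1 - q ^ (N - m)) * (1 - q ^ (N + m + 1)) + q ^ (N - m) * poleFactor q s m := by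
  obtain ⟨k, rfl⟩ := Nat.exists_eq_add_of_le hm
  simp only [poleFactor, Nat.add_sub_cancel_left]
  ring

lemma poleFactor_inv_add_mul {t : K} (ht : t ≠ 0) (q : K) (m : ℕ) :
    poleFactor q (t⁻¹ + t * q) m = (1 - t⁻¹ * q ^ m) * (1 - t * q ^ (m + 1)) := by
  simp only [poleFactor]
  field_simp
  ring

lemma pow_mul_poleCoeff (q : K) (m : ℕ) :
    q ^ m * poleCoeff q m = (-1) ^ m * q ^ (m * (m + 1) / 2) * (1 - q ^ (2 * m + 1)) := by
  have htriangle : m * (m + 1) / 2 = m + m.choose 2 := by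
    rw [← choose_two_succ, Nat.choose_two_right, Nat.add_sub_cancel, mul_comm]
  rw [poleCoeff, htriangle, pow_add]
  ring

lemma sum_range_poleCoeff_div_poleDenom_mul (hq : ∀ n : ℕ, q ^ (n + 1) ≠ 1) {M n : ℕ} (hn : n ≤ M) :
    (∑ m ∈ range n, poleCoeff q m / poleDenom q M m) * (1 - q ^ M) =
      -((-1) ^ n * q ^ n.choose 2 * (1 - q ^ n) /
        (qPochhammer q (M - n) * qPochhammer q (M + n))) := by
  simp only [poleDenom]
  induction n with
  | zero => simp
  | succ n ih =>
    obtain ⟨k, rfl⟩ := Nat.exists_eq_add_of_le hn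
    have hk : 1 - q ^ (k + 1) ≠ 0 := sub_ne_zero.mpr (hq k).symm
    have hkn : 1 - q ^ (n + 1 + k + n + 1) ≠ 0 := sub_ne_zero.mpr (hq _).symm
    have hPk := qPochhammer_ne_zero hq k
    have hPkn := qPochhammer_ne_zero hq (n + 1 + k + n)
    rw [sum_range_succ, add_mul, ih (by lia), show n + 1 + k - n = k + 1 by lia,
      show n + 1 + k - (n + 1) = k by lia, ← add_assoc (n + 1 + k) n 1, qPochhammer_succ,
      qPochhammer_succ, poleCoeff, choose_two_succ, pow_add q n]
    field_simp
    ring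

lemma sum_poleCoeff_div_poleDenom_eq_zero (hq : ∀ n : ℕ, q ^ (n + 1) ≠ 1) {M : ℕ} (hM : M ≠ 0) :
    ∑ m ∈ range (M + 1), poleCoeff q m / poleDenom q M m = 0 := by
  obtain ⟨N, rfl⟩ := Nat.exists_eq_succ_of_ne_zero hM
  have hN : 1 - q ^ (N + 1) ≠ 0 := sub_ne_zero.mpr (hq N).symm
  have hlast : 1 - q ^ (2 * (N + 1) + 1) ≠ 0 := sub_ne_zero.mpr (hq _).symm
  have hP := qPochhammer_ne_zero hq (2 * (N + 1))
  have hP0 := qPochhammer_ne_zero hq 0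
  refine (mul_eq_zero_iff_right hN).mp ?_
  rw [sum_range_succ, add_mul, sum_range_poleCoeff_div_poleDenom_mul hq le_rfl, poleDenom,
    ← two_mul, qPochhammer_succ, poleCoeff, Nat.sub_self]
  field_simp
  ring

lemma poleFactor_succ_mul_partialFraction {s : K} (hq : ∀ n : ℕ, q ^ (n + 1) ≠ 1)
    {N m : ℕ} (hm : m ≤ N) (hs : poleFactor q s m ≠ 0) :
    poleFactor q s (N + 1) *
        (q ^ m * poleCoeff q m / poleFactor q s m / poleDenom q (N + 1) m) =
      q ^ m * poleCoeff q m / poleFactor q s m / poleDenom q N m +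
        q ^ (N + 1) * (poleCoeff q m / poleDenom q (N + 1) m) := by
  have hD := poleDenom_ne_zero hq (N + 1) m
  rw [poleDenom_succ q hm] at hD ⊢
  have hpow : q ^ (N + 1) = q ^ m * q ^ (N + 1 - m) := by rw [← pow_add]; congr 1; lia
  rw [poleFactor_eq_add_pow_mul_poleFactor q s (hm.trans N.le_succ), hpow,
    show N + 1 + m + 1 = N + m + 2 by lia]
  set u := (1 - q ^ (N + 1 - m)) * (1 - q ^ (N + m + 2))
  have hu : u ≠ 0 := right_ne_zero_of_mul hD
  have hD' := left_ne_zero_of_mul hD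
  field_simp

theorem sum_partialFraction_eq_inv_prod {s : K} (hq : ∀ n : ℕ, q ^ (n + 1) ≠ 1)
    (hs : ∀ m, poleFactor q s m ≠ 0) (N : ℕ) :
    ∑ m ∈ range (N + 1), q ^ m * poleCoeff q m / poleFactor q s m / poleDenom q N m =
      (∏ m ∈ range (N + 1), poleFactor q s m)⁻¹ := by
  induction N with
  | zero =>
    have h1 : 1 - q ≠ 0 := sub_ne_zero.mpr (by simpa using (hq 0).symm)
    simp [poleDenom, qPochhammer, poleCoeff, div_right_comm, h1]
  | succ N ih =>
    have hlast : poleFactor q s (N + 1) * (q ^ (N + 1) * poleCoeff q (N + 1) /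
          poleFactor q s (N + 1) / poleDenom q (N + 1) (N + 1)) =
        q ^ (N + 1) * (poleCoeff q (N + 1) / poleDenom q (N + 1) (N + 1)) := by
      rw [← mul_div_assoc, mul_div_cancel₀ _ (hs _), mul_div_assoc]
    rw [prod_range_succ, mul_inv, ← ih, eq_mul_inv_iff_mul_eq₀ (hs _), mul_comm]
    calc poleFactor q s (N + 1) * ∑ m ∈ range (N + 2),
          q ^ m * poleCoeff q m / poleFactor q s m / poleDenom q (N + 1) m
        = ∑ m ∈ range (N + 1), q ^ m * poleCoeff q m / poleFactor q s m / poleDenom q N m +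
            q ^ (N + 1) * ∑ m ∈ range (N + 2), poleCoeff q m / poleDenom q (N + 1) m := by
          rw [mul_sum, sum_range_succ, hlast, sum_congr rfl fun m hm ↦
            poleFactor_succ_mul_partialFraction hq (mem_range_succ_iff.mp hm) (hs m),
            sum_add_distrib, ← mul_sum, add_assoc, ← mul_add, ← sum_range_succ]
      _ = ∑ m ∈ range (N + 1), q ^ m * poleCoeff q m / poleFactor q s m / poleDenom q N m := by
          rw [sum_poleCoeff_div_poleDenom_eq_zero hq N.succ_ne_zero, mul_zero, add_zero]

end Field

lemma tendsto_finsetSum_of_dominated_convergence {α β E : Type*} [NormedAddCommGroup E]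
    [CompleteSpace E] {𝓕 : Filter α} {S : α → Finset β} {f : α → β → E} {g : β → E} {bound : β → ℝ}
    (hS : Tendsto S 𝓕 atTop) (h_sum : Summable bound) (hab : ∀ b, Tendsto (f · b) 𝓕 (𝓝 (g b)))
    (h_bound : ∀ᶠ a in 𝓕, ∀ b, ‖f a b‖ ≤ bound b) :
    Tendsto (fun a ↦ ∑ b ∈ S a, f a b) 𝓕 (𝓝 (∑' b, g b)) := by
  refine Tendsto.congr (fun a ↦ (sum_eq_tsum_indicator (f a) (S a)).symm) ?_
  refine tendsto_tsum_of_dominated_convergence h_sum (fun b ↦ (hab b).congr' ?_) ?_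
  · filter_upwards [hS.eventually (eventually_ge_atTop {b})] with a ha
    rw [Set.indicator_of_mem (mem_coe.mpr (singleton_subset_iff.mp ha))]
  · filter_upwards [h_bound] with a ha b
    exact (norm_indicator_le_norm_self _ _).trans (ha b)

section NormedField

variable {𝕜 : Type*} [NormedField 𝕜] {q s t : 𝕜}

lemma pow_succ_ne_one_of_norm_lt_one (hq : ‖q‖ < 1) (n : ℕ) : q ^ (n + 1) ≠ 1 := fun h ↦ by
  simpa [← norm_pow, h] using pow_lt_one₀ (norm_nonneg q) hq n.succ_ne_zero

lemma ne_zpow_of_one_lt_norm_of_norm_lt (hq0 : 0 < ‖q‖) (hq1 : ‖q‖ < 1) (ht1 : 1 < ‖t‖)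
    (ht2 : ‖t‖ < 1 / ‖q‖) (n : ℤ) : t ≠ q ^ n := by
  rintro rfl
  rw [norm_zpow, ← zpow_zero ‖q‖, zpow_lt_zpow_iff_right_of_lt_one₀ hq0 hq1] at ht1
  rw [norm_zpow, one_div, ← zpow_neg_one, zpow_lt_zpow_iff_right_of_lt_one₀ hq0 hq1] at ht2
  lia

lemma poleFactor_inv_add_mul_ne_zero (ht0 : t ≠ 0) (ht : ∀ n : ℤ, t ≠ q ^ n) (m : ℕ) :
    poleFactor q (t⁻¹ + t * q) m ≠ 0 := by
  rw [poleFactor_inv_add_mul ht0]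
  refine mul_ne_zero (sub_ne_zero.mpr fun h ↦ ht m ?_)
    (sub_ne_zero.mpr fun h ↦ ht (-(m + 1 : ℕ)) ?_)
  · rw [zpow_natCast, ← mul_inv_cancel_left₀ ht0 (q ^ m), ← h, mul_one]
  · rw [zpow_neg, zpow_natCast]
    exact eq_inv_of_mul_eq_one_left h.symm

lemma summable_norm_poleFactor_sub_one (hq : ‖q‖ < 1) (s : 𝕜) :
    Summable fun m : ℕ ↦ ‖q ^ (2 * m + 1) - s * q ^ m‖ := by
  refine .of_nonneg_of_le (fun _ ↦ norm_nonneg _) (fun m ↦ ?_)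
    ((summable_geometric_of_lt_one (norm_nonneg q) hq).mul_left (1 + ‖s‖))
  calc ‖q ^ (2 * m + 1) - s * q ^ m‖ ≤ ‖q‖ ^ (2 * m + 1) + ‖s‖ * ‖q‖ ^ m := by
        simpa using norm_sub_le (q ^ (2 * m + 1)) (s * q ^ m)
    _ ≤ ‖q‖ ^ m + ‖s‖ * ‖q‖ ^ m := by
        gcongr ?_ + _
        exact pow_le_pow_of_le_one (norm_nonneg q) hq.le (by lia)
    _ = (1 + ‖s‖) * ‖q‖ ^ m := by ring

lemma tendsto_poleFactor (hq : ‖q‖ < 1) (s : 𝕜) : Tendsto (poleFactor q s) atTop (𝓝 1) := by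
  unfold poleFactor
  simpa using (tendsto_zero_iff_norm_tendsto_zero.mpr
    (summable_norm_poleFactor_sub_one hq s).tendsto_atTop_zero).const_add 1

lemma summable_norm_poleCoeff_div_poleFactor (hq : ‖q‖ < 1) (s : 𝕜) :
    Summable fun m : ℕ ↦ ‖q ^ m * poleCoeff q m / poleFactor q s m‖ := by
  obtain ⟨C, hC⟩ : ∃ C, ∀ m, ‖(poleFactor q s m)⁻¹‖ ≤ C := by
    simpa using (Metric.isBounded_range_of_tendsto _
      ((tendsto_poleFactor hq s).inv₀ one_ne_zero)).exists_norm_le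
  have hcoeff (m : ℕ) : ‖poleCoeff q m‖ ≤ 2 := by
    have hpow (k : ℕ) : ‖q‖ ^ k ≤ 1 := pow_le_one₀ (norm_nonneg q) hq.le
    calc ‖poleCoeff q m‖ = ‖q‖ ^ m.choose 2 * ‖1 - q ^ (2 * m + 1)‖ := by simp [poleCoeff]
      _ ≤ 1 * (1 + 1) := by
        gcongr
        · exact hpow _
        · exact (norm_sub_le _ _).trans (by simpa using hpow (2 * m + 1))
      _ = 2 := by norm_num
  refine .of_nonneg_of_le (fun _ ↦ norm_nonneg _) (fun m ↦ ?_)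
    ((summable_geometric_of_lt_one (norm_nonneg q) hq).mul_right (2 * C))
  rw [div_eq_mul_inv, norm_mul, norm_mul, norm_pow, mul_assoc]
  gcongr
  exacts [hcoeff m, hC m]

variable [CompleteSpace 𝕜]

lemma multipliable_poleFactor (hq : ‖q‖ < 1) (s : 𝕜) : Multipliable (poleFactor q s) :=
  multipliable_one_add_of_summable (summable_norm_poleFactor_sub_one hq s)

lemma multipliable_one_sub_pow_mul (hq : ‖q‖ < 1) (c : 𝕜) :
    Multipliable fun i : ℕ ↦ 1 - q ^ i * c := by
  simp only [sub_eq_add_neg]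
  refine multipliable_one_add_of_summable ?_
  simpa using (summable_geometric_of_lt_one (norm_nonneg q) hq).mul_right ‖c‖

lemma multipliable_one_sub_pow_succ_mul (hq : ‖q‖ < 1) (c : 𝕜) :
    Multipliable fun i : ℕ ↦ 1 - q ^ (i + 1) * c := by
  simpa only [pow_succ, mul_assoc] using multipliable_one_sub_pow_mul hq (q * c)

lemma multipliable_one_sub_pow_succ (hq : ‖q‖ < 1) : Multipliable fun i : ℕ ↦ 1 - q ^ (i + 1) := by
  simpa using multipliable_one_sub_pow_succ_mul hq 1

lemma tprod_one_sub_pow_succ_ne_zero (hq : ‖q‖ < 1) : ∏' i : ℕ, (1 - q ^ (i + 1)) ≠ 0 := by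
  simp only [sub_eq_add_neg]
  refine tprod_one_add_ne_zero_of_summable (fun i ↦ ?_) ?_
  · simpa [← sub_eq_add_neg] using sub_ne_zero.mpr (pow_succ_ne_one_of_norm_lt_one hq i).symm
  · simpa using (summable_nat_add_iff 1).mpr (summable_geometric_of_lt_one (norm_nonneg q) hq)

lemma tendsto_inv_qPochhammer (hq : ‖q‖ < 1) :
    Tendsto (fun n ↦ (qPochhammer q n)⁻¹) atTop (𝓝 (∏' i : ℕ, (1 - q ^ (i + 1)))⁻¹) :=
  (multipliable_one_sub_pow_succ hq).hasProd.tendsto_prod_nat.inv₀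
    (tprod_one_sub_pow_succ_ne_zero hq)

lemma tprod_poleFactor_inv_add_mul (hq : ‖q‖ < 1) (ht : t ≠ 0) :
    ∏' m, poleFactor q (t⁻¹ + t * q) m =
      (1 - t⁻¹) * ∏' i : ℕ, (1 - q ^ (i + 1) * t) * (1 - q ^ (i + 1) * t⁻¹) := by
  have hMt := multipliable_one_sub_pow_succ_mul hq t
  have hMt' := multipliable_one_sub_pow_succ_mul hq t⁻¹
  calc ∏' m, poleFactor q (t⁻¹ + t * q) m
      = ∏' m : ℕ, (1 - q ^ m * t⁻¹) * (1 - q ^ (m + 1) * t) := by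
        simp only [poleFactor_inv_add_mul ht, mul_comm t⁻¹, mul_comm t (q ^ _)]
    _ = (∏' m : ℕ, (1 - q ^ m * t⁻¹)) * ∏' m : ℕ, (1 - q ^ (m + 1) * t) :=
        (multipliable_one_sub_pow_mul hq t⁻¹).tprod_mul hMt
    _ = (1 - t⁻¹) * ∏' i : ℕ, (1 - q ^ (i + 1) * t) * (1 - q ^ (i + 1) * t⁻¹) := by
        rw [tprod_eq_zero_mul' (f := fun m ↦ 1 - q ^ m * t⁻¹) hMt', hMt.tprod_mul hMt',
          pow_zero, one_mul]
        ring

lemma tendsto_sum_partialFraction (hq : ‖q‖ < 1) (s : 𝕜) :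
    Tendsto (fun N ↦ ∑ m ∈ range (N + 1),
        q ^ m * poleCoeff q m / poleFactor q s m / poleDenom q N m) atTop
      (𝓝 ((∑' m, q ^ m * poleCoeff q m / poleFactor q s m) /
        (∏' i : ℕ, (1 - q ^ (i + 1))) ^ 2)) := by
  have hP := tendsto_inv_qPochhammer hq
  obtain ⟨C, hC⟩ : ∃ C, ∀ n, ‖(qPochhammer q n)⁻¹‖ ≤ C := by
    simpa using (Metric.isBounded_range_of_tendsto _ hP).exists_norm_le
  have hC0 : 0 ≤ C := (norm_nonneg _).trans (hC 0)
  rw [← tsum_div_const]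
  refine tendsto_finsetSum_of_dominated_convergence
    (tendsto_finset_range.comp (tendsto_add_atTop_nat 1))
    ((summable_norm_poleCoeff_div_poleFactor hq s).mul_right (C * C)) (fun m ↦ ?_)
    (.of_forall fun N m ↦ ?_)
  · simp only [poleDenom, div_eq_mul_inv _ (_ * _), sq, mul_inv]
    refine .const_mul _ (.mul (hP.comp (tendsto_sub_atTop_nat m)) (hP.comp ?_))
    simpa only [add_assoc] using tendsto_add_atTop_nat (m + 1)
  · rw [poleDenom, div_eq_mul_inv _ (_ * _), norm_mul, mul_inv, norm_mul]
    gcongr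
    exacts [hC _, hC _]

theorem tsum_poleCoeff_div_poleFactor (hq : ‖q‖ < 1) (hs : ∀ m, poleFactor q s m ≠ 0) :
    ∑' m, q ^ m * poleCoeff q m / poleFactor q s m =
      (∏' i : ℕ, (1 - q ^ (i + 1))) ^ 2 / ∏' m, poleFactor q s m := by
  have hprod : ∏' m, poleFactor q s m ≠ 0 :=
    tprod_one_add_ne_zero_of_summable hs (summable_norm_poleFactor_sub_one hq s)
  have hlim : Tendsto (fun N ↦ (∏ m ∈ range (N + 1), poleFactor q s m)⁻¹) atTop
      (𝓝 (∏' m, poleFactor q s m)⁻¹) :=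
    ((multipliable_poleFactor hq s).hasProd.tendsto_prod_nat.comp
      (tendsto_add_atTop_nat 1)).inv₀ hprod
  simp only [← sum_partialFraction_eq_inv_prod (pow_succ_ne_one_of_norm_lt_one hq) hs] at hlim
  have heq := tendsto_nhds_unique (tendsto_sum_partialFraction hq s) hlim
  rw [div_eq_iff (pow_ne_zero 2 (tprod_one_sub_pow_succ_ne_zero hq))] at heq
  rw [heq, inv_mul_eq_div]

theorem stmt7_general (hq : ‖q‖ < 1) (ht0 : t ≠ 0) (ht : ∀ n : ℤ, t ≠ q ^ n) :
    (Summable fun m : ℕ ↦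
      ‖(-1 : 𝕜) ^ m * q ^ (m * (m + 1) / 2) * (1 - q ^ (2 * m + 1)) /
        ((1 - t⁻¹ * q ^ m) * (1 - t * q ^ (m + 1)))‖) ∧
    (Multipliable fun i : ℕ ↦ (1 - q ^ (i + 1))) ∧
    (Multipliable fun i : ℕ ↦ (1 - q ^ (i + 1) * t) * (1 - q ^ (i + 1) * t⁻¹)) ∧
    (∑' m : ℕ, (-1 : 𝕜) ^ m * q ^ (m * (m + 1) / 2) * (1 - q ^ (2 * m + 1)) /
        ((1 - t⁻¹ * q ^ m) * (1 - t * q ^ (m + 1)))) =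
      (∏' i : ℕ, (1 - q ^ (i + 1))) ^ 2 /
        ((1 - t⁻¹) * ∏' i : ℕ, (1 - q ^ (i + 1) * t) * (1 - q ^ (i + 1) * t⁻¹)) ∧
    (∑' m : ℕ, (-1 : 𝕜) ^ m * q ^ (m * (m + 1) / 2) * (1 - q ^ (2 * m + 1)) /
        ((1 - t⁻¹ * q ^ m) * (1 - t * q ^ (m + 1)))) =
      t / ((t - 1) * (∏' i : ℕ, (1 - q ^ (i + 1) * t) * (1 - q ^ (i + 1) * t⁻¹)) /
        (∏' i : ℕ, (1 - q ^ (i + 1))) ^ 2) := by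
  simp only [← pow_mul_poleCoeff, ← poleFactor_inv_add_mul ht0]
  have hsum := tsum_poleCoeff_div_poleFactor hq (poleFactor_inv_add_mul_ne_zero ht0 ht)
  rw [tprod_poleFactor_inv_add_mul hq ht0] at hsum
  have hMt := multipliable_one_sub_pow_succ_mul hq
  refine ⟨summable_norm_poleCoeff_div_poleFactor hq _, multipliable_one_sub_pow_succ hq,
    (hMt t).mul (hMt t⁻¹), hsum, hsum.trans ?_⟩
  rw [show t - 1 = t * (1 - t⁻¹) by field_simp, mul_assoc t, mul_div_assoc,
    div_mul_cancel_left₀ ht0, inv_div]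

end NormedField

/-- **The Bloch–Okounkov one-point function as a reciprocal theta function.**
For `0 < |q| < 1` and `1 < |t| < 1/|q|`,
`∑_{m≥0} (-1)^m q^{m(m+1)/2} (1-q^{2m+1})/((1-t⁻¹q^m)(1-tq^{m+1}))
  = (q)_∞² / ((1-t⁻¹) ∏_{i≥1} (1-q^i t)(1-q^i t⁻¹)) = t/Θ(t)`,
all series and products converging absolutely. -/
theorem stmt7 (q t : ℂ) (hq0 : 0 < ‖q‖) (hq1 : ‖q‖ < 1)
    (ht1 : 1 < ‖t‖) (ht2 : ‖t‖ < 1 / ‖q‖) :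
    (Summable fun m : ℕ =>
      ‖(-1 : ℂ) ^ m * q ^ (m * (m + 1) / 2) * (1 - q ^ (2 * m + 1)) /
        ((1 - t⁻¹ * q ^ m) * (1 - t * q ^ (m + 1)))‖) ∧
    (Multipliable fun i : ℕ => (1 - q ^ (i + 1))) ∧
    (Multipliable fun i : ℕ => (1 - q ^ (i + 1) * t) * (1 - q ^ (i + 1) * t⁻¹)) ∧
    (∑' m : ℕ, (-1 : ℂ) ^ m * q ^ (m * (m + 1) / 2) * (1 - q ^ (2 * m + 1)) /
        ((1 - t⁻¹ * q ^ m) * (1 - t * q ^ (m + 1))))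
      = (Qinf q) ^ 2 /
          ((1 - t⁻¹) * ∏' i : ℕ, (1 - q ^ (i + 1) * t) * (1 - q ^ (i + 1) * t⁻¹)) ∧
    (∑' m : ℕ, (-1 : ℂ) ^ m * q ^ (m * (m + 1) / 2) * (1 - q ^ (2 * m + 1)) /
        ((1 - t⁻¹ * q ^ m) * (1 - t * q ^ (m + 1))))
      = t / Theta q t := by
  exact stmt7_general hq1 (norm_pos_iff.mp (one_pos.trans ht1))
    (ne_zpow_of_one_lt_norm_of_norm_lt hq0 hq1 ht1 ht2)
end

section
/- For k ∈ ℤ let c_k(q) denote the formal sum ∑_{m=0}^∞ (−1)^m q^{(m+1)(m−2k)/2} (well defined as a formal Laurent series in q: for each integer exponent only finitely many m contribute, and the exponents are bounded below). Then: (i) each c_k(q) lies in ℤ[[q]], i.e. all terms with negative exponent cancel in pairs; and (ii) the series G(t) = ∑_{k∈ℤ} c_k(q) t^{−k−1/2} is the unique formal series ∑_{n∈ℤ} g_{n+1/2}(q) t^{n+1/2} with all coefficients g_{n+1/2} ∈ ℂ[[q]] satisfying the formal q-difference equation G(qt) + q^{1/2} t G(t) = δ_{1/2}(qt), i.e. q^n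 g_{n+1/2}(q) + g_{n−1/2}(q) = q^n in ℂ[[q]] for every n ∈ ℤ. -/
/-- The coefficient of `q^j` in the formal sum `c_k(q) = ∑_{m≥0} (-1)^m q^{(m+1)(m-2k)/2}`:
the (finite) signed count of indices `m` with `(m+1)(m-2k)/2 = j`. -/
noncomputable def cCoeff (k j : ℤ) : ℂ :=
  ∑ᶠ m : ℕ, if ((m : ℤ) + 1) * ((m : ℤ) - 2 * k) = 2 * j then (-1 : ℂ) ^ m else 0

/-- `c_k(q)` viewed as a formal power series in `q` (part (i) of the statement asserts
that its negative-exponent coefficients vanish, so this captures the whole series). -/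
noncomputable def ck (k : ℤ) : PowerSeries ℂ := PowerSeries.mk fun j : ℕ => cCoeff k j

/-! The difference `f` of two solutions satisfies `f_{n-1/2} = -q^n f_{n+1/2}`; iterating,
`f_{n+1/2} = (-1)^m q^{(n+1)+(n+2)+⋯+(n+m)} f_{n+m+1/2}`. The exponent tends to `∞` with `m`, so a
uniform bound on the poles of the `f_{n+1/2}` forces `f = 0`. That the `c_k` satisfy the equation
follows by splitting off the term `m = 0` of `c_{-n}`: the remaining terms form `-q^n c_{-n-1}`.
The exponent `(m+1)(m-2k)/2` is negative only for `m < 2k`, and it is symmetric under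
`m ↦ 2k-1-m`, which reverses the sign `(-1)^m`; so the terms of `c_k` with negative exponent cancel
in pairs. -/

open HahnSeries LaurentSeries

theorem finsum_nat_eq_zero_add {M : Type*} [AddCommMonoid M] {f : ℕ → M}
    (hf : f.support.Finite) : ∑ᶠ m, f m = f 0 + ∑ᶠ m, f (m + 1) := by
  rw [← finsum_mem_univ, ← Nat.zero_union_range_succ,
    finsum_mem_union' (by simp) (hf.inter_of_right _) (hf.inter_of_right _),
    finsum_mem_singleton, finsum_mem_range Nat.succ_injective]

section Coefficients

/-- The contribution of the index `m` to the coefficient of `q^j` in the formal sum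
`c_k(q) = ∑_{m≥0} (-1)^m q^{(m+1)(m-2k)/2}`, over an arbitrary ring. The exponent condition is
doubled to avoid the division. -/
def cTerm (R : Type*) [Ring R] (k j : ℤ) (m : ℕ) : R :=
  if ((m : ℤ) + 1) * ((m : ℤ) - 2 * k) = 2 * j then (-1) ^ m else 0

/-- The coefficient of `q^j` in `c_k(q)` over an arbitrary ring; `cCoeff` is the case of `ℂ`. -/
noncomputable def cCoeffOver (R : Type*) [Ring R] (k j : ℤ) : R :=
  ∑ᶠ m, cTerm R k j m

/-- The power series `c_k(q)` over an arbitrary ring; `ck` is the case of `ℂ`. -/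
noncomputable def ckOver (R : Type*) [Ring R] (k : ℤ) : PowerSeries R :=
  PowerSeries.mk fun j : ℕ => cCoeffOver R k j

variable {R S : Type*} [Ring R] [Ring S]

theorem exponent_eq_of_cTerm_ne_zero {k j : ℤ} {m : ℕ} (h : cTerm R k j m ≠ 0) :
    ((m : ℤ) + 1) * ((m : ℤ) - 2 * k) = 2 * j := by
  by_contra hne
  exact h (if_neg hne)

theorem finite_support_cTerm (k j : ℤ) : (cTerm R k j).support.Finite := by
  refine (Set.finite_Iic (2 * |k| + 2 * |j|).toNat).subset fun m hm => ?_
  have hexp := exponent_eq_of_cTerm_ne_zero hm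
  have hk := le_abs_self k
  have hj := le_abs_self j
  by_contra hlarge
  have hm_gt : 2 * |k| + 2 * |j| < m := Int.lt_of_toNat_lt (not_le.mp hlarge)
  nlinarith [abs_nonneg j]

theorem cTerm_zero (k j : ℤ) : cTerm R k j 0 = if j = -k then 1 else 0 := by
  have hiff : (((0 : ℕ) : ℤ) + 1) * (((0 : ℕ) : ℤ) - 2 * k) = 2 * j ↔ j = -k := by grind
  simp only [cTerm, hiff, pow_zero]

theorem cTerm_succ (k j : ℤ) (m : ℕ) :
    cTerm R k j (m + 1) = -cTerm R (k - 1) (j + k) m := by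
  have hiff : (((m + 1 : ℕ) : ℤ) + 1) * (((m + 1 : ℕ) : ℤ) - 2 * k) = 2 * j ↔
      ((m : ℤ) + 1) * ((m : ℤ) - 2 * (k - 1)) = 2 * (j + k) := by grind
  simp only [cTerm, hiff, pow_succ, mul_neg_one]
  split_ifs <;> simp

theorem cTerm_add_cTerm_eq_zero {k : ℤ} {m m' : ℕ} (h : (m + m' + 1 : ℤ) = 2 * k) (j : ℤ) :
    cTerm R k j m + cTerm R k j m' = 0 := by
  have hexp : ((m' : ℤ) + 1) * ((m' : ℤ) - 2 * k) = ((m : ℤ) + 1) * ((m : ℤ) - 2 * k) := by grind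
  have hsign : (-1 : R) ^ m + (-1) ^ m' = 0 := by
    rcases m.even_or_odd with hm | hm
    · have hm' : Odd m' := by grind
      rw [hm.neg_one_pow, hm'.neg_one_pow, add_neg_cancel]
    · have hm' : Even m' := by grind
      rw [hm.neg_one_pow, hm'.neg_one_pow, neg_add_cancel]
  simp only [cTerm, hexp]
  split_ifs
  · exact hsign
  · exact add_zero 0

theorem lt_two_mul_of_cTerm_ne_zero {k j : ℤ} (hj : j < 0) {m : ℕ} (h : cTerm R k j m ≠ 0) :
    (m : ℤ) < 2 * k := by
  have hexp := exponent_eq_of_cTerm_ne_zero h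
  by_contra! hle
  nlinarith

theorem cCoeffOver_eq_zero_of_neg (k : ℤ) {j : ℤ} (hj : j < 0) : cCoeffOver R k j = 0 := by
  have hsupp : (cTerm R k j).support ⊆ Finset.range (2 * k).toNat := fun m hm => by
    simpa using lt_two_mul_of_cTerm_ne_zero hj hm
  rw [cCoeffOver, finsum_eq_sum_of_support_subset _ hsupp]
  refine Finset.sum_involution (fun m _ => (2 * k).toNat - 1 - m) ?_ ?_ ?_ ?_
  · intro m hm
    exact cTerm_add_cTerm_eq_zero (by grind) j
  all_goals grind

theorem map_cCoeffOver (φ : R →+* S) (k j : ℤ) :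
    φ (cCoeffOver R k j) = cCoeffOver S k j := by
  rw [cCoeffOver, map_finsum φ (finite_support_cTerm k j)]
  simp [cTerm, cCoeffOver, apply_ite φ]

theorem cCoeffOver_add_cCoeffOver (k j : ℤ) :
    cCoeffOver R k j + cCoeffOver R (k - 1) (j + k) = if j = -k then 1 else 0 := by
  have hfirst : cCoeffOver R k j = cTerm R k j 0 - cCoeffOver R (k - 1) (j + k) := by
    simp only [cCoeffOver, finsum_nat_eq_zero_add (finite_support_cTerm k j), cTerm_succ,
      finsum_neg_distrib, sub_eq_add_neg]
  rw [hfirst, sub_add_cancel, cTerm_zero]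

theorem coeff_coe_ckOver (k j : ℤ) : (ckOver R k : R⸨X⸩).coeff j = cCoeffOver R k j := by
  rw [PowerSeries.coeff_coe]
  split_ifs with hj
  · exact (cCoeffOver_eq_zero_of_neg k hj).symm
  · rw [ckOver, PowerSeries.coeff_mk, Int.natAbs_of_nonneg (not_lt.mp hj)]

theorem single_mul_ckOver_add_ckOver (n : ℤ) :
    (single n 1 : R⸨X⸩) * (ckOver R (-n - 1) : R⸨X⸩) + (ckOver R (-n) : R⸨X⸩) = single n 1 := by
  ext j
  have hrec := cCoeffOver_add_cCoeffOver (R := R) (-n) j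
  rw [neg_neg, ← sub_eq_add_neg, add_comm] at hrec
  rw [coeff_add, coeff_single_mul, one_mul, coeff_coe_ckOver, coeff_coe_ckOver, hrec, coeff_single]
  congr

end Coefficients

section Uniqueness

variable {R : Type*} [Ring R]

theorem exists_lt_sum_range_add_add_one (n x : ℤ) :
    ∃ m : ℕ, x < ∑ i ∈ Finset.range m, (n + i + 1) := by
  have hsum (m : ℕ) : 2 * ∑ i ∈ Finset.range m, (n + i + 1) = m * (2 * n + m + 1) := by
    induction m with
    | zero => simp
    | succ m ih => rw [Finset.sum_range_succ, mul_add, ih]; push_cast; ring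
  refine ⟨(2 * |n| + 2 * |x| + 1).toNat, ?_⟩
  have hn := neg_abs_le n
  have hx := le_abs_self x
  have hm := hsum (2 * |n| + 2 * |x| + 1).toNat
  rw [Int.toNat_of_nonneg (by positivity)] at hm
  nlinarith [abs_nonneg n, abs_nonneg x]

theorem eq_single_mul_of_single_mul_add_eq_zero {f : ℤ → R⸨X⸩}
    (hf : ∀ n, single n 1 * f n + f (n - 1) = 0) (n : ℤ) (m : ℕ) :
    f n = single (∑ i ∈ Finset.range m, (n + i + 1)) ((-1) ^ m) * f (n + m) := by
  induction m with
  | zero => simp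
  | succ m ih =>
    have hstep : f (n + m) = single (n + m + 1) (-1) * f (n + m + 1) := by
      have hnext := hf (n + m + 1)
      rw [add_sub_cancel_right] at hnext
      rw [single_neg, neg_mul]
      exact eq_neg_of_add_eq_zero_right hnext
    rw [ih, hstep, ← mul_assoc, single_mul_single, ← Finset.sum_range_succ (fun i : ℕ => n + i + 1),
      ← pow_succ, Nat.cast_succ, ← add_assoc]

theorem eq_zero_of_single_mul_add_eq_zero {f : ℤ → R⸨X⸩} {N : ℤ}
    (hN : ∀ n, ∀ j < N, (f n).coeff j = 0)
    (hf : ∀ n, single n 1 * f n + f (n - 1) = 0) (n : ℤ) : f n = 0 := by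
  ext j
  obtain ⟨m, hm⟩ := exists_lt_sum_range_add_add_one n (j - N)
  rw [eq_single_mul_of_single_mul_add_eq_zero hf n m, coeff_single_mul, hN _ _ (by lia), mul_zero,
    coeff_zero]

theorem eq_of_single_mul_add_eq {f g : ℤ → R⸨X⸩} {N : ℤ}
    (hfN : ∀ n, ∀ j < N, (f n).coeff j = 0) (hgN : ∀ n, ∀ j < N, (g n).coeff j = 0)
    (h : ∀ n, single n 1 * f n + f (n - 1) = single n 1 * g n + g (n - 1)) (n : ℤ) :
    f n = g n := by
  refine sub_eq_zero.mp (eq_zero_of_single_mul_add_eq_zero (f := f - g) (N := N) ?_ ?_ n)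
  · intro n j hj
    rw [Pi.sub_apply, coeff_sub, hfN n j hj, hgN n j hj, sub_zero]
  · intro n
    rw [Pi.sub_apply, Pi.sub_apply, mul_sub, sub_add_sub_comm, h n, sub_self]

theorem coeff_coe_powerSeries_of_neg (f : PowerSeries R) {j : ℤ} (hj : j < 0) :
    (f : R⸨X⸩).coeff j = 0 := by
  rw [PowerSeries.coeff_coe, if_pos hj]

theorem eq_ckOver_of_single_mul_add_eq {g : ℤ → R⸨X⸩} {N : ℤ}
    (hN : ∀ n, ∀ j < N, (g n).coeff j = 0)
    (hg : ∀ n, single n 1 * g n + g (n - 1) = single n 1) (n : ℤ) :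
    g n = (ckOver R (-n - 1) : R⸨X⸩) := by
  refine eq_of_single_mul_add_eq (N := min N 0) (g := fun n => (ckOver R (-n - 1) : R⸨X⸩))
    (fun n j hj => hN n j (lt_min_iff.mp hj).1)
    (fun n j hj => coeff_coe_powerSeries_of_neg _ (lt_min_iff.mp hj).2) (fun n => ?_) n
  have hindex : -(n - 1) - 1 = -n := by ring
  rw [hg, hindex, single_mul_ckOver_add_ckOver]

end Uniqueness

theorem stmt8_general (R : Type*) [Ring R] :
    (∀ k : ℤ, (∀ j : ℤ, j < 0 → cCoeffOver R k j = 0) ∧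
      (∀ j : ℤ, ∃ z : ℤ, cCoeffOver R k j = (z : R))) ∧
    (∀ n : ℤ,
      (single n 1 : R⸨X⸩) * (ckOver R (-n - 1) : R⸨X⸩) + (ckOver R (-n) : R⸨X⸩) = single n 1) ∧
    (∀ (g : ℤ → R⸨X⸩) (N : ℤ), (∀ n, ∀ j < N, (g n).coeff j = 0) →
      (∀ n : ℤ, single n 1 * g n + g (n - 1) = single n 1) →
      ∀ n : ℤ, g n = (ckOver R (-n - 1) : R⸨X⸩)) :=
  ⟨fun k => ⟨fun _ => cCoeffOver_eq_zero_of_neg k,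
      fun j => ⟨cCoeffOver ℤ k j, (map_cCoeffOver (Int.castRingHom R) k j).symm⟩⟩,
    single_mul_ckOver_add_ckOver, fun _ _ => eq_ckOver_of_single_mul_add_eq⟩

/-- **The explicit solution of the 1-point `q`-difference equation.**
(i) Each `c_k(q) = ∑_{m≥0} (-1)^m q^{(m+1)(m-2k)/2}` lies in `ℤ[[q]]`: its coefficients at
negative exponents vanish (cancel in pairs) and all its coefficients are integers.
(ii) `G(t) = ∑_{k∈ℤ} c_k(q) t^{-k-1/2}`, i.e. the series with `t^{n+1/2}`-coefficient
`g_{n+1/2} = c_{-n-1}`, is the unique formal series with coefficients in `ℂ[[q]]`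
satisfying `G(qt) + q^{1/2} t G(t) = δ_{1/2}(qt)`, i.e.
`q^n g_{n+1/2} + g_{n-1/2} = q^n` for every `n ∈ ℤ`. -/
theorem stmt8 :
    (∀ k : ℤ, (∀ j : ℤ, j < 0 → cCoeff k j = 0) ∧ (∀ j : ℤ, ∃ z : ℤ, cCoeff k j = (z : ℂ))) ∧
    (∀ n : ℤ,
      (HahnSeries.single n (1 : ℂ) : LaurentSeries ℂ) * ((ck (-n - 1) : LaurentSeries ℂ))
          + ((ck (-n) : LaurentSeries ℂ))
        = (HahnSeries.single n (1 : ℂ) : LaurentSeries ℂ)) ∧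
    (∀ g : ℤ → PowerSeries ℂ,
      (∀ n : ℤ,
        (HahnSeries.single n (1 : ℂ) : LaurentSeries ℂ) * ((g n : LaurentSeries ℂ))
            + ((g (n - 1) : LaurentSeries ℂ))
          = (HahnSeries.single n (1 : ℂ) : LaurentSeries ℂ)) →
      ∀ n : ℤ, g n = ck (-n - 1)) := by
  obtain ⟨hcoeff, hsol, huniq⟩ := stmt8_general ℂ
  exact ⟨hcoeff, hsol, fun g hg n => ofPowerSeries_injective
    (huniq (fun n => g n) 0 (fun n _ => coeff_coe_powerSeries_of_neg (g n)) hg n)⟩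
end

section
/- Let q ∈ ℂ with 0 < |q| < 1, and for k ∈ ℤ let c_k(q) = ∑_{m=0}^∞ (−1)^m q^{(m+1)(m−2k)/2}, an absolutely convergent series of complex numbers. Then for every t ∈ ℂ with 1 < |t| < 1/|q| the bilateral series ∑_{k∈ℤ} c_k(q) t^{−k} converges absolutely and equals ∑_{m=0}^∞ (−1)^m q^{m(m+1)/2} ( q^m t^{−1}/(1 − t^{−1}q^m) + 1 + q^{m+1} t/(1 − t q^{m+1}) ) = ∑_{m=0}^∞ (−1)^m q^{m(m+1)/2} (1 − q^{2m+1}) / ( (1 − t^{−1}q^m)(1 − t q^{m+1}) ). -/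
/-!
The `m`-th exponent in `c_k` is `m (m + 1) / 2 - (m + 1) k`. For `k ≥ 0` the terms `m` and
`2k - 1 - m` cancel, so the first `2k` terms of `c_k` sum to zero, and the shift `m = j + 2k` turns
the exponent into `j (j + 1) / 2 + j k`. With `x_j = t⁻¹ q^j` and `y_j = t q^(j+1)`, the product
`c_k t^(-k)` is therefore the sum over `j` of `(-1)^j q^(j(j+1)/2)` times `x_j^k` if `k ≥ 0`, and
times `y_j^(-k)` if `k < 0`. In the annulus `1 < ‖t‖ < 1 / ‖q‖` all `x_j` and `y_j` lie in a disc of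
radius less than one, so the double series converges absolutely. Summing over `k` first gives two
geometric series for each `j`, and `x_j y_j = q^(2j+1)` yields the second closed form.
-/

section Preliminaries

theorem div_one_sub_add_one_add_div_one_sub {K : Type*} [Field K] {x y : K}
    (hx : x ≠ 1) (hy : y ≠ 1) :
    x / (1 - x) + 1 + y / (1 - y) = (1 - x * y) / ((1 - x) * (1 - y)) := by
  have hx' : 1 - x ≠ 0 := sub_ne_zero.mpr hx.symm
  have hy' : 1 - y ≠ 0 := sub_ne_zero.mpr hy.symm
  field_simp
  ring

theorem summable_pow_natAbs {r : ℝ} (hr₀ : 0 ≤ r) (hr₁ : r < 1) :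
    Summable fun k : ℤ => r ^ k.natAbs := by
  apply Summable.of_nat_of_neg <;> simpa using summable_geometric_of_lt_one hr₀ hr₁

variable {𝕜 : Type*} [NormedField 𝕜]

theorem ne_one_of_norm_lt_one {x : 𝕜} (hx : ‖x‖ < 1) : x ≠ 1 := by
  rintro rfl
  exact hx.ne norm_one

theorem norm_mul_pow_le {q : 𝕜} (hq₁ : ‖q‖ ≤ 1) (a : 𝕜) (j : ℕ) : ‖a * q ^ j‖ ≤ ‖a‖ := by
  rw [norm_mul, norm_pow]
  exact mul_le_of_le_one_right (norm_nonneg a) (pow_le_one₀ (norm_nonneg q) hq₁)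

end Preliminaries

section BilateralGeometric

/-- The two-sided geometric sequence `…, y ^ 2, y, 1, x, x ^ 2, …` with `1` at index `0`; it encodes
the dependence on `k` of the terms of the bilateral series. -/
def bilateralGeom {M : Type*} [Monoid M] (x y : M) : ℤ → M
  | Int.ofNat n => x ^ n
  | Int.negSucc n => y ^ (n + 1)

@[simp]
theorem bilateralGeom_natCast {M : Type*} [Monoid M] (x y : M) (n : ℕ) :
    bilateralGeom x y n = x ^ n :=
  rfl

@[simp]
theorem bilateralGeom_negSucc {M : Type*} [Monoid M] (x y : M) (n : ℕ) :
    bilateralGeom x y (Int.negSucc n) = y ^ (n + 1) :=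
  rfl

theorem bilateralGeom_inv_mul_mul {G : Type*} [DivisionCommMonoid G] (t x y : G) (k : ℤ) :
    bilateralGeom (t⁻¹ * x) (t * y) k = bilateralGeom x y k * t ^ (-k) := by
  cases k with
  | ofNat n =>
    rw [Int.ofNat_eq_natCast, bilateralGeom_natCast, bilateralGeom_natCast, mul_pow, inv_pow,
      zpow_neg, zpow_natCast, mul_comm]
  | negSucc n =>
    rw [bilateralGeom_negSucc, bilateralGeom_negSucc, mul_pow, Int.neg_negSucc, zpow_natCast,
      mul_comm]

variable {𝕜 : Type*} [NormedField 𝕜]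

theorem norm_bilateralGeom_le {x y : 𝕜} {r : ℝ} (hx : ‖x‖ ≤ r) (hy : ‖y‖ ≤ r) (k : ℤ) :
    ‖bilateralGeom x y k‖ ≤ r ^ k.natAbs := by
  cases k with
  | ofNat n => simpa using pow_le_pow_left₀ (norm_nonneg x) hx n
  | negSucc n => simpa using pow_le_pow_left₀ (norm_nonneg y) hy (n + 1)

theorem hasSum_bilateralGeom {x y : 𝕜} (hx : ‖x‖ < 1) (hy : ‖y‖ < 1) :
    HasSum (bilateralGeom x y) (x / (1 - x) + 1 + y / (1 - y)) := by
  have nonneg_part : HasSum (fun n : ℕ => bilateralGeom x y n) (x / (1 - x) + 1) := by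
    have hx' : 1 - x ≠ 0 := sub_ne_zero.mpr (ne_one_of_norm_lt_one hx).symm
    have h : x / (1 - x) + 1 = (1 - x)⁻¹ := by field_simp; ring
    simpa only [bilateralGeom_natCast, h] using hasSum_geometric_of_norm_lt_one hx
  have neg_part : HasSum (fun n : ℕ => bilateralGeom x y (-(n + 1))) (y / (1 - y)) := by
    simpa only [← Int.negSucc_eq, bilateralGeom_negSucc, pow_succ', div_eq_mul_inv] using
      (hasSum_geometric_of_norm_lt_one hy).mul_left y
  exact nonneg_part.of_nat_of_neg_add_one neg_part

variable {ι : Type*} {w x y : ι → 𝕜} {r : ℝ}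

theorem summable_norm_mul_bilateralGeom (hw : Summable fun j => ‖w j‖) (hr₀ : 0 ≤ r) (hr₁ : r < 1)
    (hx : ∀ j, ‖x j‖ ≤ r) (hy : ∀ j, ‖y j‖ ≤ r) :
    Summable fun p : ℤ × ι => ‖w p.2 * bilateralGeom (x p.2) (y p.2) p.1‖ := by
  have majorant : Summable fun p : ℤ × ι => r ^ p.1.natAbs * ‖w p.2‖ :=
    (summable_pow_natAbs hr₀ hr₁).mul_of_nonneg hw (fun _ => pow_nonneg hr₀ _)
      (fun _ => norm_nonneg _)
  refine majorant.of_nonneg_of_le (fun _ => norm_nonneg _) fun ⟨k, j⟩ => ?_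
  rw [norm_mul, mul_comm]
  exact mul_le_mul_of_nonneg_right (norm_bilateralGeom_le (hx j) (hy j) k) (norm_nonneg _)

theorem summable_norm_tsum_mul_bilateralGeom (hw : Summable fun j => ‖w j‖) (hr₀ : 0 ≤ r)
    (hr₁ : r < 1) (hx : ∀ j, ‖x j‖ ≤ r) (hy : ∀ j, ‖y j‖ ≤ r) :
    Summable fun k : ℤ => ‖∑' j, w j * bilateralGeom (x j) (y j) k‖ := by
  have hs := summable_norm_mul_bilateralGeom hw hr₀ hr₁ hx hy
  exact hs.prod.of_nonneg_of_le (fun _ => norm_nonneg _)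
    fun k => norm_tsum_le_tsum_norm (hs.prod_factor k)

theorem tsum_tsum_mul_bilateralGeom [CompleteSpace 𝕜] (hw : Summable fun j => ‖w j‖) (hr₀ : 0 ≤ r)
    (hr₁ : r < 1) (hx : ∀ j, ‖x j‖ ≤ r) (hy : ∀ j, ‖y j‖ ≤ r) :
    ∑' k : ℤ, ∑' j, w j * bilateralGeom (x j) (y j) k =
      ∑' j, w j * (x j / (1 - x j) + 1 + y j / (1 - y j)) := by
  have hs : Summable (Function.uncurry fun (k : ℤ) j => w j * bilateralGeom (x j) (y j) k) :=
    (summable_norm_mul_bilateralGeom hw hr₀ hr₁ hx hy).of_norm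
  rw [← hs.tsum_comm]
  refine tsum_congr fun j => ?_
  rw [tsum_mul_left,
    (hasSum_bilateralGeom ((hx j).trans_lt hr₁) ((hy j).trans_lt hr₁)).tsum_eq]

end BilateralGeometric

section TriangularWeight

/-- The coefficient `(-1) ^ m * q ^ (m (m + 1) / 2)` of the partial theta function, which weights
the `m`-th summand of both closed forms. The division of natural numbers is exact. -/
def triangularWeight {R : Type*} [Ring R] (q : R) (m : ℕ) : R :=
  (-1) ^ m * q ^ (m * (m + 1) / 2)

theorem two_mul_natCast_triangular (m : ℕ) :
    2 * ((m * (m + 1) / 2 : ℕ) : ℤ) = m * (m + 1) := by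
  exact_mod_cast Nat.mul_div_cancel' (Nat.even_mul_succ_self m).two_dvd

variable {𝕜 : Type*} [NormedField 𝕜] {q : 𝕜}

theorem norm_triangularWeight_le (hq₁ : ‖q‖ ≤ 1) (m : ℕ) : ‖triangularWeight q m‖ ≤ ‖q‖ ^ m := by
  have le_triangular : m ≤ m * (m + 1) / 2 := by
    rw [Nat.le_div_iff_mul_le two_pos]
    cases m <;> grind
  simpa [triangularWeight] using pow_le_pow_of_le_one (norm_nonneg q) hq₁ le_triangular

theorem summable_norm_triangularWeight (hq₁ : ‖q‖ < 1) :
    Summable fun m => ‖triangularWeight q m‖ :=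
  (summable_geometric_of_lt_one (norm_nonneg q) hq₁).of_nonneg_of_le (fun _ => norm_nonneg _)
    (norm_triangularWeight_le hq₁.le)

end TriangularWeight

section BlochOkounkov

/-- The `m`-th term of the series defining the coefficient `c_k(q)` of the Bloch–Okounkov 1-point
series. The division of integers is exact. -/
def blochOkounkovTerm {K : Type*} [DivisionRing K] (q : K) (k : ℤ) (m : ℕ) : K :=
  (-1) ^ m * q ^ ((((m : ℤ) + 1) * ((m : ℤ) - 2 * k)) / 2)

section DivisionRing

variable {K : Type*} [DivisionRing K] (q : K)

theorem blochOkounkovTerm_negSucc (n m : ℕ) :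
    blochOkounkovTerm q (Int.negSucc n) m =
      triangularWeight q m * bilateralGeom (q ^ m) (q ^ (m + 1)) (Int.negSucc n) := by
  have exponent : ((m : ℤ) + 1) * (m - 2 * Int.negSucc n) / 2 =
      (m * (m + 1) / 2 + (m + 1) * (n + 1) : ℕ) := by
    refine Int.ediv_eq_of_eq_mul_right two_ne_zero ?_
    have triangular := two_mul_natCast_triangular m
    rw [Int.negSucc_eq]
    push_cast at triangular ⊢
    linear_combination -triangular
  rw [blochOkounkovTerm, exponent, zpow_natCast, pow_add, pow_mul, bilateralGeom_negSucc,
    triangularWeight, mul_assoc]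

theorem blochOkounkovTerm_natCast_add (n j : ℕ) :
    blochOkounkovTerm q n (j + 2 * n) =
      triangularWeight q j * bilateralGeom (q ^ j) (q ^ (j + 1)) n := by
  have exponent : ((j + 2 * n : ℕ) + 1 : ℤ) * ((j + 2 * n : ℕ) - 2 * n) / 2 =
      (j * (j + 1) / 2 + j * n : ℕ) := by
    refine Int.ediv_eq_of_eq_mul_right two_ne_zero ?_
    have triangular := two_mul_natCast_triangular j
    push_cast at triangular ⊢
    linear_combination -triangular
  have sign : (-1 : K) ^ (j + 2 * n) = (-1) ^ j := by
    rw [pow_add, (even_two_mul n).neg_one_pow, mul_one]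
  rw [blochOkounkovTerm, exponent, sign, zpow_natCast, pow_add, pow_mul, bilateralGeom_natCast,
    triangularWeight, mul_assoc]

theorem blochOkounkovTerm_add_eq_zero {k : ℤ} {m m' : ℕ} (h : (m : ℤ) + m' + 1 = 2 * k) :
    blochOkounkovTerm q k m + blochOkounkovTerm q k m' = 0 := by
  have exponent : ((m' : ℤ) + 1) * (m' - 2 * k) = (m + 1) * (m - 2 * k) := by
    rw [← h]
    ring
  have sign : (-1 : K) ^ m + (-1) ^ m' = 0 := by
    rcases Nat.even_or_odd m with hm | hm
    · have hm' : Odd m' := by grind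
      rw [hm.neg_one_pow, hm'.neg_one_pow, add_neg_cancel]
    · have hm' : Even m' := by grind
      rw [hm.neg_one_pow, hm'.neg_one_pow, neg_add_cancel]
  rw [blochOkounkovTerm, blochOkounkovTerm, exponent, ← add_mul, sign, zero_mul]

theorem sum_range_blochOkounkovTerm (n : ℕ) :
    ∑ m ∈ Finset.range (2 * n), blochOkounkovTerm q n m = 0 := by
  refine Finset.sum_involution (fun m _ => 2 * n - 1 - m) (fun m hm => ?_) ?_ ?_ ?_
  · have := Finset.mem_range.mp hm
    exact blochOkounkovTerm_add_eq_zero q (by omega)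
  all_goals grind

end DivisionRing

variable {𝕜 : Type*} [NormedField 𝕜] {q : 𝕜}

theorem summable_norm_triangularWeight_mul_bilateralGeom (hq₁ : ‖q‖ < 1) (k : ℤ) :
    Summable fun j => ‖triangularWeight q j * bilateralGeom (q ^ j) (q ^ (j + 1)) k‖ := by
  have norm_pow_le_one (j : ℕ) : ‖q ^ j‖ ≤ 1 := by simpa using norm_mul_pow_le hq₁.le 1 j
  refine (summable_norm_triangularWeight hq₁).of_nonneg_of_le (fun _ => norm_nonneg _) fun j => ?_
  rw [norm_mul]
  refine mul_le_of_le_one_right (norm_nonneg _) ?_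
  simpa using norm_bilateralGeom_le (norm_pow_le_one j) (norm_pow_le_one (j + 1)) k

theorem summable_norm_blochOkounkovTerm (hq₁ : ‖q‖ < 1) (k : ℤ) :
    Summable fun m => ‖blochOkounkovTerm q k m‖ := by
  have hs := summable_norm_triangularWeight_mul_bilateralGeom hq₁ k
  cases k with
  | ofNat n =>
    rw [← summable_nat_add_iff (2 * n)]
    simpa only [Int.ofNat_eq_natCast, blochOkounkovTerm_natCast_add] using hs
  | negSucc n => simpa only [blochOkounkovTerm_negSucc] using hs

variable [CompleteSpace 𝕜]

theorem tsum_blochOkounkovTerm (hq₁ : ‖q‖ < 1) (k : ℤ) :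
    ∑' m, blochOkounkovTerm q k m =
      ∑' j, triangularWeight q j * bilateralGeom (q ^ j) (q ^ (j + 1)) k := by
  cases k with
  | ofNat n =>
    have hs := (summable_norm_blochOkounkovTerm hq₁ n).of_norm
    rw [Int.ofNat_eq_natCast, ← hs.sum_add_tsum_nat_add (2 * n), sum_range_blochOkounkovTerm,
      zero_add]
    exact tsum_congr (blochOkounkovTerm_natCast_add q n)
  | negSucc n => exact tsum_congr (blochOkounkovTerm_negSucc q n)

theorem tsum_blochOkounkovTerm_mul_zpow (hq₁ : ‖q‖ < 1) (t : 𝕜) (k : ℤ) :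
    (∑' m, blochOkounkovTerm q k m) * t ^ (-k) =
      ∑' j, triangularWeight q j * bilateralGeom (t⁻¹ * q ^ j) (t * q ^ (j + 1)) k := by
  simp only [tsum_blochOkounkovTerm hq₁, ← tsum_mul_right, bilateralGeom_inv_mul_mul, mul_assoc]

theorem stmt10_general (q : 𝕜) (hq0 : 0 < ‖q‖) (hq1 : ‖q‖ < 1) :
    (∀ k : ℤ, Summable fun m : ℕ => ‖blochOkounkovTerm q k m‖) ∧
    ∀ t : 𝕜, 1 < ‖t‖ → ‖t‖ < 1 / ‖q‖ →
      (Summable fun k : ℤ => ‖(∑' m : ℕ, blochOkounkovTerm q k m) * t ^ (-k)‖) ∧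
      (∑' k : ℤ, (∑' m : ℕ, blochOkounkovTerm q k m) * t ^ (-k))
        = ∑' m : ℕ, triangularWeight q m *
            (q ^ m * t⁻¹ / (1 - t⁻¹ * q ^ m) + 1 + q ^ (m + 1) * t / (1 - t * q ^ (m + 1))) ∧
      (∑' k : ℤ, (∑' m : ℕ, blochOkounkovTerm q k m) * t ^ (-k))
        = ∑' m : ℕ, triangularWeight q m * (1 - q ^ (2 * m + 1)) /
            ((1 - t⁻¹ * q ^ m) * (1 - t * q ^ (m + 1))) := by
  refine ⟨summable_norm_blochOkounkovTerm hq1, fun t ht₁ ht₂ => ?_⟩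
  have ht : t ≠ 0 := norm_pos_iff.mp (one_pos.trans ht₁)
  set r : ℝ := max ‖t⁻¹‖ ‖t * q‖
  have hr₀ : 0 ≤ r := (norm_nonneg _).trans (le_max_left _ _)
  have hr₁ : r < 1 := max_lt (by simpa using inv_lt_one_of_one_lt₀ ht₁)
    (by simpa using (lt_div_iff₀ hq0).mp ht₂)
  have hx (j : ℕ) : ‖t⁻¹ * q ^ j‖ ≤ r := (norm_mul_pow_le hq1.le _ j).trans (le_max_left _ _)
  have hy (j : ℕ) : ‖t * q ^ (j + 1)‖ ≤ r := by
    rw [pow_succ', ← mul_assoc]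
    exact (norm_mul_pow_le hq1.le _ j).trans (le_max_right _ _)
  have hw := summable_norm_triangularWeight hq1
  simp only [tsum_blochOkounkovTerm_mul_zpow hq1, tsum_tsum_mul_bilateralGeom hw hr₀ hr₁ hx hy]
  refine ⟨summable_norm_tsum_mul_bilateralGeom hw hr₀ hr₁ hx hy, ?_, tsum_congr fun j => ?_⟩
  · simp only [mul_comm t⁻¹, mul_comm t]
  · have mul_eq : t⁻¹ * q ^ j * (t * q ^ (j + 1)) = q ^ (2 * j + 1) := by
      field_simp
      ring
    rw [div_one_sub_add_one_add_div_one_sub (ne_one_of_norm_lt_one ((hx j).trans_lt hr₁))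
      (ne_one_of_norm_lt_one ((hy j).trans_lt hr₁)), mul_eq, mul_div_assoc]

end BlochOkounkov

/-- **Resummation of the Bloch–Okounkov 1-point series.**  For `0 < |q| < 1` all the series
`c_k(q) = ∑_{m≥0} (-1)^m q^{(m+1)(m-2k)/2}` (`k ∈ ℤ`) converge absolutely, and for every
`t` with `1 < |t| < 1/|q|` the bilateral series `∑_{k∈ℤ} c_k(q) t^{-k}` converges
absolutely and equals
`∑_{m≥0} (-1)^m q^{m(m+1)/2} ( q^m t⁻¹/(1-t⁻¹q^m) + 1 + q^{m+1} t/(1-tq^{m+1}) )`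
`= ∑_{m≥0} (-1)^m q^{m(m+1)/2} (1-q^{2m+1})/((1-t⁻¹q^m)(1-tq^{m+1}))`. -/
theorem stmt10 (q : ℂ) (hq0 : 0 < ‖q‖) (hq1 : ‖q‖ < 1) :
    (∀ k : ℤ, Summable fun m : ℕ =>
      ‖(-1 : ℂ) ^ m * q ^ ((((m : ℤ) + 1) * ((m : ℤ) - 2 * k)) / 2)‖) ∧
    ∀ t : ℂ, 1 < ‖t‖ → ‖t‖ < 1 / ‖q‖ →
      (Summable fun k : ℤ =>
        ‖(∑' m : ℕ, (-1 : ℂ) ^ m * q ^ ((((m : ℤ) + 1) * ((m : ℤ) - 2 * k)) / 2)) *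
          t ^ (-k)‖) ∧
      (∑' k : ℤ,
          (∑' m : ℕ, (-1 : ℂ) ^ m * q ^ ((((m : ℤ) + 1) * ((m : ℤ) - 2 * k)) / 2)) * t ^ (-k))
        = ∑' m : ℕ, (-1 : ℂ) ^ m * q ^ (m * (m + 1) / 2) *
            (q ^ m * t⁻¹ / (1 - t⁻¹ * q ^ m) + 1 + q ^ (m + 1) * t / (1 - t * q ^ (m + 1))) ∧
      (∑' k : ℤ,
          (∑' m : ℕ, (-1 : ℂ) ^ m * q ^ ((((m : ℤ) + 1) * ((m : ℤ) - 2 * k)) / 2)) * t ^ (-k))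
        = ∑' m : ℕ, (-1 : ℂ) ^ m * q ^ (m * (m + 1) / 2) * (1 - q ^ (2 * m + 1)) /
            ((1 - t⁻¹ * q ^ m) * (1 - t * q ^ (m + 1))) :=
  stmt10_general q hq0 hq1
end

section
/- Fix an integer k ≥ 1 and q ∈ ℂ with 0 < |q| < 1. The series H_k(t₁,t₂) = P_{k+1}(t₁^{−1},q) · P_{k+1}(t₂^{−1},q) − ∑_{n=1}^∞ n^{2k} q^n [ (t₁/t₂)^n + (t₂/t₁)^n + (t₁t₂)^n + (t₁t₂)^{−n} ] / (1−q^n)² converges absolutely, and uniformly on compact subsets, on the domain Ω = { (t₁,t₂) ∈ ℂ× × ℂ× : |t₁| > 1, |t₂| > 1, |q t₁ t₂| < 1, |q/(t₁t₂)| < 1, |q t₁/t₂| < 1, |q t₂/t₁| < 1 }, defining a holomorphic function there; moreover this function extends to a holomorphic function on the open set U = { (t₁,t₂) ∈ ℂ× × ℂ× : t₁ ∉ q^ℤ, t₂ ∉ q^ℤ, t₁t₂ ∉ q^ℤ, and t₁/t₂ ∉ q^ℤ∖{1} } (in particular H_k has a meromorphic extension to ℂ× × ℂ×). -/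
/-- `P_{k+1}(t,q) = (1/k!) ∑_{n≥1} ( n^k t^n/(1-q^n) + (-1)^{k+1} n^k q^n t^{-n}/(1-q^n) )`
(defined by this absolutely convergent series for `0 < |q| < 1`, `|q| < |t| < 1`). -/
noncomputable def Pfun (k : ℕ) (q t : ℂ) : ℂ :=
  (1 / (k.factorial : ℂ)) * ∑' n : ℕ,
    (((n : ℂ) + 1) ^ k * t ^ (n + 1) / (1 - q ^ (n + 1)) +
      (-1 : ℂ) ^ (k + 1) * ((n : ℂ) + 1) ^ k * q ^ (n + 1) * (t⁻¹) ^ (n + 1) /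
        (1 - q ^ (n + 1)))

/-- The `n`-th term (`n ≥ 1`, indexed by `n - 1 : ℕ`) of the correction series in `H_k`:
`n^{2k} q^n [ (t₁/t₂)^n + (t₂/t₁)^n + (t₁t₂)^n + (t₁t₂)^{-n} ] / (1-q^n)²`. -/
noncomputable def Hterm (k : ℕ) (q : ℂ) (n : ℕ) (p : ℂ × ℂ) : ℂ :=
  ((n : ℂ) + 1) ^ (2 * k) * q ^ (n + 1) *
    ((p.1 / p.2) ^ (n + 1) + (p.2 / p.1) ^ (n + 1) + (p.1 * p.2) ^ (n + 1) +
      ((p.1 * p.2)⁻¹) ^ (n + 1)) / (1 - q ^ (n + 1)) ^ 2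

/-- `H_k(t₁,t₂) = P_{k+1}(t₁⁻¹,q) P_{k+1}(t₂⁻¹,q)
  - ∑_{n≥1} n^{2k} q^n [ (t₁/t₂)^n + (t₂/t₁)^n + (t₁t₂)^n + (t₁t₂)^{-n} ]/(1-q^n)²`. -/
noncomputable def Hfun (k : ℕ) (q : ℂ) (p : ℂ × ℂ) : ℂ :=
  Pfun k q p.1⁻¹ * Pfun k q p.2⁻¹ - ∑' n : ℕ, Hterm k q n p

/-- The domain `Ω`. -/
def Omega (q : ℂ) : Set (ℂ × ℂ) :=
  {p | 1 < ‖p.1‖ ∧ 1 < ‖p.2‖ ∧ ‖q * p.1 * p.2‖ < 1 ∧ ‖q / (p.1 * p.2)‖ < 1 ∧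
    ‖q * p.1 / p.2‖ < 1 ∧ ‖q * p.2 / p.1‖ < 1}

/-- The open set `U`: `t₁, t₂, t₁t₂ ∉ q^ℤ` and `t₁/t₂ ∉ q^ℤ ∖ {1}`. -/
def Udom (q : ℂ) : Set (ℂ × ℂ) :=
  {p | p.1 ≠ 0 ∧ p.2 ≠ 0 ∧ (∀ m : ℤ, p.1 ≠ q ^ m) ∧ (∀ m : ℤ, p.2 ≠ q ^ m) ∧
    (∀ m : ℤ, p.1 * p.2 ≠ q ^ m) ∧ (∀ m : ℤ, m ≠ 0 → p.1 / p.2 ≠ q ^ m)}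

/-! The extension comes from summing in the other order. Expanding `(1 - qⁿ)^(-s-1)` as a binomial
series turns `∑_{n ≥ 1} n^j xⁿ / (1 - qⁿ)^(s+1)` into `∑_{m ≥ 0} C(m+s, s) Li_{-j}(q^m x)`. The
rational function `Li_{-j}` has its only pole at `1` and vanishes at `0`, so the new series converges
wherever `x` avoids the points `q^(-m)`. Every series in `H_k` is a combination of such sums, with
`s = 0` in the two factors `P_{k+1}` and `s = 1` in the correction term. -/

section

open Filter Metric Set Topology

theorem hasSum_tsum_comm {α β γ : Type*} [AddCommMonoid α] [TopologicalSpace α] [ContinuousAdd α]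
    [T3Space α] {f : β × γ → α} {r : β → α} {c : γ → α} (hf : Summable f)
    (hr : ∀ b, HasSum (fun g => f (b, g)) (r b)) (hc : ∀ g, HasSum (fun b => f (b, g)) (c g)) :
    HasSum c (∑' b, r b) := by
  rw [(hf.hasSum.prod_fiberwise hr).tsum_eq]
  exact ((Equiv.prodComm γ β).hasSum_iff.2 hf.hasSum).prod_fiberwise hc

theorem pow_mul_mem_ball {𝕜 : Type*} [NormedDivisionRing 𝕜] {q z : 𝕜} {R : ℝ} (hq : ‖q‖ ≤ 1)
    (m : ℕ) (hz : z ∈ ball 0 R) : q ^ m * z ∈ ball 0 R := by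
  rw [mem_ball_zero_iff] at hz ⊢
  rw [norm_mul, norm_pow]
  exact (mul_le_of_le_one_left (norm_nonneg z) (pow_le_one₀ (norm_nonneg q) hq)).trans_lt hz

section PowerSeries

variable {ι 𝕜 : Type*} [RCLike 𝕜]

theorem hasSumLocallyUniformlyOn_mul_pow {a : ι → 𝕜} {e : ι → ℕ} {f : 𝕜 → 𝕜} {R : ℝ}
    (hf : ∀ z ∈ ball (0 : 𝕜) R, HasSum (fun i => a i * z ^ e i) (f z)) :
    HasSumLocallyUniformlyOn (fun i z => a i * z ^ e i) f (ball 0 R) := by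
  refine hasSumLocallyUniformlyOn_of_of_forall_exists_nhds fun x hx => ?_
  obtain ⟨r, hxr, hrR⟩ := exists_between (mem_ball_zero_iff.1 hx)
  have hr : ‖(r : 𝕜)‖ = r := by
    rw [RCLike.norm_ofReal, abs_of_nonneg ((norm_nonneg x).trans hxr.le)]
  have hsum : Summable fun i => ‖a i * (r : 𝕜) ^ e i‖ :=
    (hf r (mem_ball_zero_iff.2 (hr.trans_lt hrR))).summable.norm
  refine ⟨ball 0 r, mem_nhdsWithin_of_mem_nhds (isOpen_ball.mem_nhds (mem_ball_zero_iff.2 hxr)), ?_⟩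
  refine (HasSumUniformlyOn.of_norm_le_summable hsum fun i z hz => ?_).congr_right fun z hz =>
    (hf z (ball_subset_ball hrR.le hz)).tsum_eq
  rw [norm_mul, norm_mul, norm_pow, norm_pow, hr]
  gcongr
  exact (mem_ball_zero_iff.1 hz).le

theorem hasSum_mul_pow_deriv {a : ι → ℂ} {e : ι → ℕ} {f : ℂ → ℂ} {R : ℝ}
    (hf : ∀ z ∈ ball (0 : ℂ) R, HasSum (fun i => a i * z ^ e i) (f z)) {z : ℂ}
    (hz : z ∈ ball 0 R) : HasSum (fun i => a i * (e i * z ^ (e i - 1))) (deriv f z) := by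
  have hderiv := ((hasSumLocallyUniformlyOn_mul_pow hf).deriv
    (Eventually.of_forall fun s => by fun_prop) isOpen_ball).tendsto_at hz
  refine hderiv.congr fun s => ?_
  rw [Function.comp_apply, deriv_fun_sum fun i _ => by fun_prop]
  simp

theorem summable_prod_mul_pow_mul {a w : ℕ → 𝕜} {q x : 𝕜} (hq : ‖q‖ ≤ 1)
    (hw : Summable fun m => w m * q ^ m) (ha : Summable fun n => a n * x ^ (n + 1)) :
    Summable fun p : ℕ × ℕ => w p.1 * (a p.2 * (q ^ p.1 * x) ^ (p.2 + 1)) := by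
  refine .of_norm_bounded
    (hw.norm.mul_of_nonneg ha.norm (fun _ => norm_nonneg _) fun _ => norm_nonneg _) ?_
  rintro ⟨m, n⟩
  have hqm : (‖q‖ ^ m) ^ (n + 1) ≤ ‖q‖ ^ m :=
    pow_le_of_le_one (by positivity) (pow_le_one₀ (norm_nonneg q) hq) n.succ_ne_zero
  calc ‖w m * (a n * (q ^ m * x) ^ (n + 1))‖
      = ‖w m‖ * (‖q‖ ^ m) ^ (n + 1) * ‖a n * x ^ (n + 1)‖ := by
        simp only [norm_mul, norm_pow, mul_pow]; ring
    _ ≤ ‖w m‖ * ‖q‖ ^ m * ‖a n * x ^ (n + 1)‖ := by gcongr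
    _ = ‖w m * q ^ m‖ * ‖a n * x ^ (n + 1)‖ := by rw [norm_mul (w m), norm_pow]

theorem hasSum_mul_pow_of_hasSum_weights {a w d : ℕ → 𝕜} {f : 𝕜 → 𝕜} {q x : 𝕜}
    (hq : ‖q‖ ≤ 1) (hx : x ∈ ball 0 1)
    (hf : ∀ z ∈ ball (0 : 𝕜) 1, HasSum (fun n => a n * z ^ (n + 1)) (f z))
    (hd : ∀ n, HasSum (fun m => w m * (q ^ (n + 1)) ^ m) (d n)) :
    HasSum (fun n => a n * d n * x ^ (n + 1)) (∑' m, w m * f (q ^ m * x)) := by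
  refine hasSum_tsum_comm (summable_prod_mul_pow_mul hq ?_ (hf x hx).summable)
    (fun m => (hf _ (pow_mul_mem_ball hq m hx)).mul_left (w m)) fun n => ?_
  · simpa only [zero_add, pow_one] using (hd 0).summable
  · rw [mul_right_comm]
    exact ((hd n).mul_left (a n * x ^ (n + 1))).congr_fun fun m => by ring

end PowerSeries

section ScaledSum

variable {E : Type*} [NormedAddCommGroup E] [NormedSpace ℂ E] {f : ℂ → E} {w : ℕ → ℂ} {q : ℂ}

theorem norm_smul_comp_pow_mul_le {C δ : ℝ} (hC : 0 ≤ C) (hq : ‖q‖ ≤ 1)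
    (hfC : ∀ z ∈ ball (0 : ℂ) δ, ‖f z‖ ≤ C * ‖z‖) (m : ℕ) {z : ℂ} (hz : z ∈ ball (0 : ℂ) δ) :
    ‖w m • f (q ^ m * z)‖ ≤ ‖w m * q ^ m‖ * (C * δ) := by
  have hzδ : ‖z‖ ≤ δ := (mem_ball_zero_iff.1 hz).le
  calc ‖w m • f (q ^ m * z)‖ ≤ ‖w m‖ * (C * ‖q ^ m * z‖) := by
        rw [norm_smul]
        gcongr
        exact hfC _ (pow_mul_mem_ball hq m hz)
    _ = ‖w m * q ^ m‖ * (C * ‖z‖) := by simp only [norm_mul]; ring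
    _ ≤ ‖w m * q ^ m‖ * (C * δ) := by gcongr

theorem summable_comp_add_mul_pow (hw : Summable fun m => w m * q ^ m) (M : ℕ) :
    Summable fun m => w (m + M) * q ^ m := by
  rcases eq_or_ne q 0 with rfl | hq
  · exact summable_of_ne_finset_zero (s := {0}) fun m hm => by
      rw [zero_pow (by simpa using hm), mul_zero]
  · rw [← summable_mul_right_iff (pow_ne_zero M hq)]
    simpa only [pow_add, mul_assoc] using (summable_nat_add_iff M).2 hw

variable [CompleteSpace E]

theorem differentiableOn_tsum_smul_comp_pow_mul {C δ : ℝ} (hC : 0 ≤ C) (hq : ‖q‖ ≤ 1)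
    (hw : Summable fun m => w m * q ^ m) (hf : DifferentiableOn ℂ f (ball 0 δ))
    (hfC : ∀ z ∈ ball (0 : ℂ) δ, ‖f z‖ ≤ C * ‖z‖) :
    DifferentiableOn ℂ (fun z => ∑' m, w m • f (q ^ m * z)) (ball 0 δ) :=
  Complex.differentiableOn_tsum_of_summable_norm (hw.norm.mul_right (C * δ))
    (fun m => (hf.comp (by fun_prop) fun _ => pow_mul_mem_ball hq m).const_smul (w m))
    isOpen_ball fun m _ => norm_smul_comp_pow_mul_le hC hq hfC m

theorem differentiableAt_tsum_smul_comp_pow_mul {x : ℂ} (hq : ‖q‖ < 1)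
    (hw : Summable fun m => w m * q ^ m) (hf0 : f 0 = 0)
    (hf : ∀ᶠ z in 𝓝 0, DifferentiableAt ℂ f z) (hx : ∀ m, DifferentiableAt ℂ f (q ^ m * x)) :
    DifferentiableAt ℂ (fun z => ∑' m, w m • f (q ^ m * z)) x := by
  obtain ⟨C, hC, hfC⟩ := hf.self_of_nhds.isBigO_sub.exists_nonneg
  simp only [hf0, sub_zero] at hfC
  obtain ⟨δ, hδ, hball⟩ := Metric.eventually_nhds_iff_ball.1 (hf.and hfC.bound)
  have hfδ : DifferentiableOn ℂ f (ball 0 δ) := fun z hz =>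
    (hball z hz).1.differentiableWithinAt
  have hfCδ : ∀ z ∈ ball (0 : ℂ) δ, ‖f z‖ ≤ C * ‖z‖ := fun z hz => (hball z hz).2
  obtain ⟨M, hM⟩ : ∃ M, q ^ M * x ∈ ball (0 : ℂ) δ := by
    have hlim : Tendsto (fun m => q ^ m * x) atTop (𝓝 0) := by
      simpa using (tendsto_pow_atTop_nhds_zero_of_norm_lt_one hq).mul_const x
    exact (hlim.eventually (ball_mem_nhds 0 hδ)).exists
  have hwM : Summable fun m => w (m + M) * q ^ m := summable_comp_add_mul_pow hw M
  have htail : DifferentiableAt ℂ (fun z => ∑' m, w (m + M) • f (q ^ m * (q ^ M * z))) x :=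
    DifferentiableAt.comp (g := fun z => ∑' m, w (m + M) • f (q ^ m * z)) x
      ((differentiableOn_tsum_smul_comp_pow_mul hC hq.le hwM hfδ hfCδ).differentiableAt
        (isOpen_ball.mem_nhds hM)) (by fun_prop)
  have hhead : DifferentiableAt ℂ (fun z => ∑ m ∈ Finset.range M, w m • f (q ^ m * z)) x :=
    .fun_sum fun m _ => ((hx m).comp x (by fun_prop)).const_smul (w m)
  have hnear : ∀ᶠ z in 𝓝 x, q ^ M * z ∈ ball (0 : ℂ) δ :=
    ContinuousAt.eventually_mem (by fun_prop) (isOpen_ball.mem_nhds hM)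
  refine (hhead.fun_add htail).congr_of_eventuallyEq (hnear.mono fun z hz => ?_)
  have hsum : Summable fun m => w (m + M) • f (q ^ m * (q ^ M * z)) :=
    .of_norm_bounded (hwM.norm.mul_right (C * δ)) fun m =>
      norm_smul_comp_pow_mul_le (w := fun m => w (m + M)) hC hq.le hfCδ m hz
  simp only [← mul_assoc, ← pow_add] at hsum ⊢
  exact (((summable_nat_add_iff M).1 hsum).sum_add_tsum_nat_add M).symm

end ScaledSum

section PolylogNeg

/-- The polylogarithm `Li_{-j}(z) = ∑_{n ≥ 1} n^j zⁿ`, continued from the unit disc to `ℂ ∖ {1}`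
as `(z d/dz)^j (z / (1 - z))`. -/
noncomputable def polylogNeg : ℕ → ℂ → ℂ
  | 0 => fun z => z / (1 - z)
  | j + 1 => fun z => z * deriv (polylogNeg j) z

theorem polylogNeg_zero_right (j : ℕ) : polylogNeg j 0 = 0 := by
  cases j <;> simp [polylogNeg]

theorem differentiableOn_polylogNeg (j : ℕ) : DifferentiableOn ℂ (polylogNeg j) {1}ᶜ := by
  induction j with
  | zero =>
    exact differentiableOn_id.div (by fun_prop) fun z hz => sub_ne_zero.2 (Ne.symm hz)
  | succ j ih => exact differentiableOn_id.mul (ih.deriv isOpen_compl_singleton)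

theorem differentiableAt_polylogNeg (j : ℕ) {z : ℂ} (hz : z ≠ 1) :
    DifferentiableAt ℂ (polylogNeg j) z :=
  (differentiableOn_polylogNeg j).differentiableAt (isOpen_compl_singleton.mem_nhds hz)

theorem hasSum_polylogNeg (j : ℕ) :
    ∀ z ∈ ball (0 : ℂ) 1,
      HasSum (fun n : ℕ => ((n : ℂ) + 1) ^ j * z ^ (n + 1)) (polylogNeg j z) := by
  induction j with
  | zero =>
    intro z hz
    simpa [polylogNeg, pow_succ', div_eq_mul_inv] using
      (hasSum_geometric_of_norm_lt_one (mem_ball_zero_iff.1 hz)).mul_left z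
  | succ j ih =>
    intro z hz
    refine ((hasSum_mul_pow_deriv ih hz).mul_left z).congr_fun fun n => ?_
    push_cast [Nat.add_sub_cancel]
    ring

end PolylogNeg

section LambertSeries

/-- The Lambert-type series `∑_{n ≥ 1} n^j xⁿ / (1 - qⁿ)^(s+1)`, continued from the unit disc to
all `x` outside `{q^(-m) | m ≥ 0}`. -/
noncomputable def lambertExt (j s : ℕ) (q x : ℂ) : ℂ :=
  ∑' m : ℕ, ((m + s).choose s : ℂ) * polylogNeg j (q ^ m * x)

variable {j s : ℕ} {q x : ℂ}

theorem hasSum_lambertExt (hq : ‖q‖ < 1) (hx : ‖x‖ < 1) :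
    HasSum (fun n : ℕ => ((n : ℂ) + 1) ^ j / (1 - q ^ (n + 1)) ^ (s + 1) * x ^ (n + 1))
      (lambertExt j s q x) := by
  have hgeom (n : ℕ) := hasSum_choose_mul_geometric_of_norm_lt_one s
    (show ‖q ^ (n + 1)‖ < 1 by
      rw [norm_pow]; exact pow_lt_one₀ (norm_nonneg q) hq n.succ_ne_zero)
  simpa only [mul_one_div, lambertExt] using
    hasSum_mul_pow_of_hasSum_weights hq.le (mem_ball_zero_iff.2 hx) (hasSum_polylogNeg j) hgeom

theorem hasSumLocallyUniformlyOn_lambertExt (hq : ‖q‖ < 1) :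
    HasSumLocallyUniformlyOn
      (fun (n : ℕ) x => ((n : ℂ) + 1) ^ j / (1 - q ^ (n + 1)) ^ (s + 1) * x ^ (n + 1))
      (lambertExt j s q) (ball 0 1) :=
  hasSumLocallyUniformlyOn_mul_pow fun _ hx => hasSum_lambertExt hq (mem_ball_zero_iff.1 hx)

theorem differentiableAt_lambertExt (hq : ‖q‖ < 1) (hx : ∀ m : ℕ, q ^ m * x ≠ 1) :
    DifferentiableAt ℂ (lambertExt j s q) x :=
  differentiableAt_tsum_smul_comp_pow_mul hq (summable_choose_mul_geometric_of_norm_lt_one s hq)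
    (polylogNeg_zero_right j)
    ((isOpen_compl_singleton.eventually_mem zero_ne_one).mono fun _ =>
      differentiableAt_polylogNeg j)
    fun m => differentiableAt_polylogNeg j (hx m)

end LambertSeries

section IntegerPowers

variable {q x : ℂ}

theorem inv_ne_zpow_iff {m : ℤ} : x⁻¹ ≠ q ^ m ↔ x ≠ q ^ (-m) := by
  rw [Ne, inv_eq_iff_eq_inv, zpow_neg]

theorem pow_mul_ne_one_of_forall_ne_zpow (hx : ∀ m : ℤ, m ≠ 0 → x ≠ q ^ m) {m : ℕ} (hm : m ≠ 0) :
    q ^ m * x ≠ 1 := fun h =>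
  hx (-m) (by simpa using hm) (by
    rw [zpow_neg, zpow_natCast]; exact eq_inv_of_mul_eq_one_right h)

theorem differentiableAt_lambertExt_mul {j s : ℕ} (hq : ‖q‖ < 1)
    (hx : ∀ m : ℤ, m ≠ 0 → x ≠ q ^ m) : DifferentiableAt ℂ (lambertExt j s q) (q * x) :=
  differentiableAt_lambertExt hq fun m => by
    rw [← mul_assoc, ← pow_succ]
    exact pow_mul_ne_one_of_forall_ne_zpow hx m.succ_ne_zero

theorem mem_Ioo_of_norm_zpow_mem_Ioo {a b m : ℤ} (hq0 : 0 < ‖q‖) (hq1 : ‖q‖ < 1)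
    (hm : ‖q ^ m‖ ∈ Ioo (‖q‖ ^ a) (‖q‖ ^ b)) : m ∈ Ioo b a := by
  have hanti := zpow_right_strictAnti₀ hq0 hq1
  rw [norm_zpow] at hm
  exact ⟨hanti.lt_iff_gt.1 hm.2, hanti.lt_iff_gt.1 hm.1⟩

theorem ne_zpow_of_norm_inv_mem_Ioo (hq0 : 0 < ‖q‖) (hq1 : ‖q‖ < 1) (hx : ‖x⁻¹‖ ∈ Ioo ‖q‖ 1)
    (m : ℤ) : x ≠ q ^ m := by
  rintro rfl
  have hm : -m ∈ Ioo 0 1 := mem_Ioo_of_norm_zpow_mem_Ioo hq0 hq1 (by simpa using hx)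
  grind

theorem ne_zpow_of_norm_mem_Ioo_inv (hq0 : 0 < ‖q‖) (hq1 : ‖q‖ < 1) (hx : ‖x‖ ∈ Ioo ‖q‖ ‖q‖⁻¹)
    {m : ℤ} (hm : m ≠ 0) : x ≠ q ^ m := by
  rintro rfl
  have hm' : m ∈ Ioo (-1) 1 := mem_Ioo_of_norm_zpow_mem_Ioo hq0 hq1 (by simpa using hx)
  grind

theorem norm_lt_norm_inv_of_norm_mul_lt_one (hx : x ≠ 0) (h : ‖q * x‖ < 1) : ‖q‖ < ‖x⁻¹‖ := by
  rwa [norm_inv, ← one_div, lt_div_iff₀ (norm_pos_iff.2 hx), ← norm_mul]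

end IntegerPowers

section Pfun

variable {k : ℕ} {q t : ℂ}

/-- The continuation of `Pfun k q` from the annulus `‖q‖ < ‖t‖ < 1` to `ℂˣ ∖ q^ℤ`. -/
noncomputable def pfunExt (k : ℕ) (q t : ℂ) : ℂ :=
  1 / (k.factorial : ℂ) * (lambertExt k 0 q t + (-1) ^ (k + 1) * lambertExt k 0 q (q * t⁻¹))

theorem hasSum_Pfun_terms (ht : ‖t‖ ∈ Ioo ‖q‖ 1) :
    HasSum (fun n : ℕ => ((n : ℂ) + 1) ^ k * t ^ (n + 1) / (1 - q ^ (n + 1)) +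
        (-1 : ℂ) ^ (k + 1) * ((n : ℂ) + 1) ^ k * q ^ (n + 1) * (t⁻¹) ^ (n + 1) /
          (1 - q ^ (n + 1)))
      (lambertExt k 0 q t + (-1) ^ (k + 1) * lambertExt k 0 q (q * t⁻¹)) := by
  have hq : ‖q‖ < 1 := ht.1.trans ht.2
  have hqt : ‖q * t⁻¹‖ < 1 := by
    rw [← div_eq_mul_inv, norm_div, div_lt_one ((norm_nonneg q).trans_lt ht.1)]
    exact ht.1
  refine ((hasSum_lambertExt hq ht.2).add
    ((hasSum_lambertExt hq hqt).mul_left ((-1) ^ (k + 1)))).congr_fun fun n => ?_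
  rw [mul_pow]
  ring

theorem Pfun_eq_pfunExt (ht : ‖t‖ ∈ Ioo ‖q‖ 1) : Pfun k q t = pfunExt k q t := by
  rw [Pfun, (hasSum_Pfun_terms ht).tsum_eq, pfunExt]

theorem differentiableAt_pfunExt (hq : ‖q‖ < 1) (ht0 : t ≠ 0) (ht : ∀ m : ℤ, t ≠ q ^ m) :
    DifferentiableAt ℂ (pfunExt k q) t := by
  have hpos : DifferentiableAt ℂ (lambertExt k 0 q) t := by
    refine differentiableAt_lambertExt hq fun m => ?_
    rcases eq_or_ne m 0 with rfl | hm
    · simpa using ht 0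
    · exact pow_mul_ne_one_of_forall_ne_zpow (fun m _ => ht m) hm
  have hneg : DifferentiableAt ℂ (fun z => lambertExt k 0 q (q * z⁻¹)) t :=
    (differentiableAt_lambertExt_mul hq fun m _ => inv_ne_zpow_iff.2 (ht (-m))).comp t
      ((differentiableAt_inv ht0).const_mul q)
  exact (hpos.add (hneg.const_mul _)).const_mul _

end Pfun

section Omega

variable {q : ℂ} {p : ℂ × ℂ}

theorem swap_mem_Omega (hp : p ∈ Omega q) : p.swap ∈ Omega q := by
  obtain ⟨h1, h2, hprod, hinv, h12, h21⟩ := hp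
  exact ⟨h2, h1, by rwa [Prod.fst_swap, Prod.snd_swap, mul_right_comm],
    by rwa [Prod.fst_swap, Prod.snd_swap, mul_comm p.2], h21, h12⟩

theorem fst_ne_zero_of_mem_Omega (hp : p ∈ Omega q) : p.1 ≠ 0 :=
  norm_pos_iff.1 (zero_lt_one.trans hp.1)

theorem snd_ne_zero_of_mem_Omega (hp : p ∈ Omega q) : p.2 ≠ 0 :=
  fst_ne_zero_of_mem_Omega (swap_mem_Omega hp)

theorem norm_inv_fst_mem_Ioo_of_mem_Omega (hp : p ∈ Omega q) : ‖p.1⁻¹‖ ∈ Ioo ‖q‖ 1 := by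
  refine ⟨norm_lt_norm_inv_of_norm_mul_lt_one (fst_ne_zero_of_mem_Omega hp) ?_, ?_⟩
  · refine lt_of_le_of_lt ?_ hp.2.2.1
    rw [norm_mul (q * p.1)]
    exact le_mul_of_one_le_right (norm_nonneg _) hp.2.1.le
  · rw [norm_inv]
    exact inv_lt_one_of_one_lt₀ hp.1

theorem norm_inv_snd_mem_Ioo_of_mem_Omega (hp : p ∈ Omega q) : ‖p.2⁻¹‖ ∈ Ioo ‖q‖ 1 :=
  norm_inv_fst_mem_Ioo_of_mem_Omega (swap_mem_Omega hp)

theorem norm_inv_mul_mem_Ioo_of_mem_Omega (hp : p ∈ Omega q) :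
    ‖(p.1 * p.2)⁻¹‖ ∈ Ioo ‖q‖ 1 := by
  refine ⟨norm_lt_norm_inv_of_norm_mul_lt_one (mul_ne_zero (fst_ne_zero_of_mem_Omega hp)
    (snd_ne_zero_of_mem_Omega hp)) (by rw [← mul_assoc]; exact hp.2.2.1), ?_⟩
  rw [norm_inv, norm_mul]
  exact inv_lt_one_of_one_lt₀ (one_lt_mul_of_lt_of_le hp.1 hp.2.1.le)

theorem norm_div_mem_Ioo_of_mem_Omega (hq0 : 0 < ‖q‖) (hp : p ∈ Omega q) :
    ‖p.1 / p.2‖ ∈ Ioo ‖q‖ ‖q‖⁻¹ := by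
  constructor
  · rw [← inv_div]
    exact norm_lt_norm_inv_of_norm_mul_lt_one
      (div_ne_zero (snd_ne_zero_of_mem_Omega hp) (fst_ne_zero_of_mem_Omega hp))
      (by rw [← mul_div_assoc]; exact hp.2.2.2.2.2)
  · rw [← one_div, lt_div_iff₀' hq0, ← norm_mul, ← mul_div_assoc]
    exact hp.2.2.2.2.1

theorem Omega_subset_Udom (hq0 : 0 < ‖q‖) (hq1 : ‖q‖ < 1) : Omega q ⊆ Udom q := fun _ hp =>
  ⟨fst_ne_zero_of_mem_Omega hp, snd_ne_zero_of_mem_Omega hp,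
    ne_zpow_of_norm_inv_mem_Ioo hq0 hq1 (norm_inv_fst_mem_Ioo_of_mem_Omega hp),
    ne_zpow_of_norm_inv_mem_Ioo hq0 hq1 (norm_inv_snd_mem_Ioo_of_mem_Omega hp),
    ne_zpow_of_norm_inv_mem_Ioo hq0 hq1 (norm_inv_mul_mem_Ioo_of_mem_Omega hp),
    fun _ => ne_zpow_of_norm_mem_Ioo_inv hq0 hq1 (norm_div_mem_Ioo_of_mem_Omega hq0 hp)⟩

end Omega

section Hfun

variable {k : ℕ} {q : ℂ} {p : ℂ × ℂ}

theorem Hterm_eq_add (k : ℕ) (q : ℂ) (n : ℕ) (p : ℂ × ℂ) :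
    Hterm k q n p =
      ((n : ℂ) + 1) ^ (2 * k) / (1 - q ^ (n + 1)) ^ (1 + 1) * (q * (p.1 / p.2)) ^ (n + 1) +
      ((n : ℂ) + 1) ^ (2 * k) / (1 - q ^ (n + 1)) ^ (1 + 1) * (q * (p.2 / p.1)) ^ (n + 1) +
      ((n : ℂ) + 1) ^ (2 * k) / (1 - q ^ (n + 1)) ^ (1 + 1) * (q * (p.1 * p.2)) ^ (n + 1) +
      ((n : ℂ) + 1) ^ (2 * k) / (1 - q ^ (n + 1)) ^ (1 + 1) * (q * (p.1 * p.2)⁻¹) ^ (n + 1) := by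
  simp only [Hterm, mul_pow q]
  ring

/-- The continuation from `Omega q` to `Udom q` of the correction series `∑' n, Hterm k q n p`. -/
noncomputable def htermSumExt (k : ℕ) (q : ℂ) (p : ℂ × ℂ) : ℂ :=
  lambertExt (2 * k) 1 q (q * (p.1 / p.2)) + lambertExt (2 * k) 1 q (q * (p.2 / p.1)) +
    lambertExt (2 * k) 1 q (q * (p.1 * p.2)) + lambertExt (2 * k) 1 q (q * (p.1 * p.2)⁻¹)

theorem hasSumLocallyUniformlyOn_Hterm (hq : ‖q‖ < 1) :
    HasSumLocallyUniformlyOn (Hterm k q) (htermSumExt k q) (Omega q) := by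
  have hlambert (u : ℂ × ℂ → ℂ) (hcont : ContinuousOn u (Omega q))
      (hu : ∀ p ∈ Omega q, ‖q * u p‖ < 1) :=
    (hasSumLocallyUniformlyOn_lambertExt (j := 2 * k) (s := 1) hq).comp (fun p => q * u p)
      (fun p hp => mem_ball_zero_iff.2 (hu p hp)) (hcont.const_mul q)
  have hdiv := hlambert (fun p => p.1 / p.2)
    (continuousOn_fst.div continuousOn_snd fun _ => snd_ne_zero_of_mem_Omega)
    fun p hp => by rw [← mul_div_assoc]; exact hp.2.2.2.2.1
  have hdiv' := hlambert (fun p => p.2 / p.1)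
    (continuousOn_snd.div continuousOn_fst fun _ => fst_ne_zero_of_mem_Omega)
    fun p hp => by rw [← mul_div_assoc]; exact hp.2.2.2.2.2
  have hmul := hlambert (fun p => p.1 * p.2) (by fun_prop)
    fun p hp => by rw [← mul_assoc]; exact hp.2.2.1
  have hinv := hlambert (fun p => (p.1 * p.2)⁻¹)
    ((continuousOn_fst.mul continuousOn_snd).inv₀ fun p hp =>
      mul_ne_zero (fst_ne_zero_of_mem_Omega hp) (snd_ne_zero_of_mem_Omega hp))
    fun p hp => by rw [← div_eq_mul_inv]; exact hp.2.2.2.1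
  refine (((hdiv.add hdiv').add hmul).add hinv).congr fun s p _ => ?_
  simp only [Hterm_eq_add, Finset.sum_add_distrib, Pi.add_apply]

theorem differentiableAt_htermSumExt (hq : ‖q‖ < 1) (hp : p ∈ Udom q) :
    DifferentiableAt ℂ (htermSumExt k q) p := by
  obtain ⟨h1, h2, -, -, hmul, hdiv⟩ := hp
  have hlambert (u : ℂ × ℂ → ℂ) (hu : DifferentiableAt ℂ u p)
      (hne : ∀ m : ℤ, m ≠ 0 → u p ≠ q ^ m) :
      DifferentiableAt ℂ (fun p => lambertExt (2 * k) 1 q (q * u p)) p :=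
    DifferentiableAt.comp (g := lambertExt (2 * k) 1 q) p (differentiableAt_lambertExt_mul hq hne)
      (hu.const_mul q)
  refine (((hlambert (fun p => p.1 / p.2) (by fun_prop (disch := exact h2)) hdiv).add
    (hlambert (fun p => p.2 / p.1) (by fun_prop (disch := exact h1)) fun m hm => ?_)).add
    (hlambert (fun p => p.1 * p.2) (by fun_prop) fun m _ => hmul m)).add
    (hlambert (fun p => (p.1 * p.2)⁻¹) (by fun_prop (disch := exact mul_ne_zero h1 h2))
      fun m _ => inv_ne_zpow_iff.2 (hmul (-m)))
  rw [← inv_div]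
  exact inv_ne_zpow_iff.2 (hdiv (-m) (neg_ne_zero.2 hm))

/-- The continuation of `Hfun k q` from `Omega q` to `Udom q`. -/
noncomputable def hfunExt (k : ℕ) (q : ℂ) (p : ℂ × ℂ) : ℂ :=
  pfunExt k q p.1⁻¹ * pfunExt k q p.2⁻¹ - htermSumExt k q p

theorem Hfun_eqOn_hfunExt (hq : ‖q‖ < 1) : EqOn (Hfun k q) (hfunExt k q) (Omega q) :=
  fun p hp => by
    rw [Hfun, hfunExt, Pfun_eq_pfunExt (norm_inv_fst_mem_Ioo_of_mem_Omega hp),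
      Pfun_eq_pfunExt (norm_inv_snd_mem_Ioo_of_mem_Omega hp),
      ((hasSumLocallyUniformlyOn_Hterm hq).hasSum hp).tsum_eq]

theorem differentiableOn_hfunExt (hq : ‖q‖ < 1) :
    DifferentiableOn ℂ (hfunExt k q) (Udom q) := by
  intro p hp
  have hpfun (u : ℂ × ℂ → ℂ) (hu : DifferentiableAt ℂ u p) (hu0 : u p ≠ 0)
      (hne : ∀ m : ℤ, u p ≠ q ^ m) : DifferentiableAt ℂ (fun p => pfunExt k q (u p)⁻¹) p :=
    DifferentiableAt.comp (g := pfunExt k q) p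
      (differentiableAt_pfunExt hq (inv_ne_zero hu0) fun m => inv_ne_zpow_iff.2 (hne (-m)))
      (hu.fun_inv hu0)
  exact (((hpfun Prod.fst differentiableAt_fst hp.1 hp.2.2.1).mul
    (hpfun Prod.snd differentiableAt_snd hp.2.1 hp.2.2.2.1)).sub
    (differentiableAt_htermSumExt hq hp)).differentiableWithinAt

end Hfun

end

/-- **Convergence and analytic continuation of the 2-point building blocks `H_k`.**
For `k ≥ 1` and `0 < |q| < 1`: all constituent series of `H_k` converge absolutely at
each point of `Ω`, the correction series converges locally uniformly on `Ω`, `H_k` is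
holomorphic on `Ω`, and it extends to a holomorphic function on the open set `U`
(in particular `H_k` has a meromorphic extension to `ℂ× × ℂ×`). -/
theorem stmt11 (k : ℕ) (hk : 1 ≤ k) (q : ℂ) (hq0 : 0 < ‖q‖) (hq1 : ‖q‖ < 1) :
    (∀ p ∈ Omega q,
      (Summable fun n : ℕ =>
        ‖((n : ℂ) + 1) ^ k * (p.1⁻¹) ^ (n + 1) / (1 - q ^ (n + 1)) +
          (-1 : ℂ) ^ (k + 1) * ((n : ℂ) + 1) ^ k * q ^ (n + 1) * ((p.1⁻¹)⁻¹) ^ (n + 1) /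
            (1 - q ^ (n + 1))‖) ∧
      (Summable fun n : ℕ =>
        ‖((n : ℂ) + 1) ^ k * (p.2⁻¹) ^ (n + 1) / (1 - q ^ (n + 1)) +
          (-1 : ℂ) ^ (k + 1) * ((n : ℂ) + 1) ^ k * q ^ (n + 1) * ((p.2⁻¹)⁻¹) ^ (n + 1) /
            (1 - q ^ (n + 1))‖) ∧
      (Summable fun n : ℕ => ‖Hterm k q n p‖)) ∧
    TendstoLocallyUniformlyOn
      (fun N : ℕ => fun p : ℂ × ℂ => ∑ n ∈ Finset.range N, Hterm k q n p)
      (fun p : ℂ × ℂ => ∑' n : ℕ, Hterm k q n p) Filter.atTop (Omega q) ∧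
    DifferentiableOn ℂ (Hfun k q) (Omega q) ∧
    ∃ G : ℂ × ℂ → ℂ, DifferentiableOn ℂ G (Udom q) ∧ ∀ p ∈ Omega q, G p = Hfun k q p := by
  refine ⟨fun p hp => ⟨(hasSum_Pfun_terms (norm_inv_fst_mem_Ioo_of_mem_Omega hp)).summable.norm,
    (hasSum_Pfun_terms (norm_inv_snd_mem_Ioo_of_mem_Omega hp)).summable.norm,
    ((hasSumLocallyUniformlyOn_Hterm hq1).hasSum hp).summable.norm⟩, ?_, ?_,
    hfunExt k q, differentiableOn_hfunExt hq1, fun p hp => (Hfun_eqOn_hfunExt hq1 hp).symm⟩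
  · exact (hasSumLocallyUniformlyOn_Hterm hq1).summableLocallyUniformlyOn
      |>.hasSumLocallyUniformlyOn.tendstoLocallyUniformlyOn_finsetRange
  · exact ((differentiableOn_hfunExt hq1).mono (Omega_subset_Udom hq0 hq1)).congr
      (Hfun_eqOn_hfunExt hq1)
end

section
/- Fix any family B_{m,l} ∈ ℂ((q)) indexed by (m,l) ∈ ℤ². Suppose F = ∑_{m,l∈ℤ} a_{m,l}(q) t₁^{m+1/2} t₂^{l+1/2} and F′ = ∑_{m,l∈ℤ} a′_{m,l}(q) t₁^{m+1/2} t₂^{l+1/2} are two formal series with all coefficients in ℂ[[q]], both symmetric (a_{m,l} = a_{l,m} and a′_{m,l} = a′_{l,m} for all m,l) and both satisfying the same inhomogeneous q-difference equation F(qt₁, t₂) + q^{1/2} t₁ t₂ F(t₁, t₂) = B, i.e. q^m a_{m,l} + a_{m−1,l−1} = B_{m,l} and q^m a′_{m,l} + a′_{m−1,l−1} = B_{m,l} for all m, l ∈ ℤ. Then F = F′, i.e. a_{m,l} = a′_{m,l} for all m, l. In particular, the Bloch–Okounkov 2-point equation G(qt₁,t₂) + q^{1/2} t₁ t₂ G(t₁,t₂)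 = δ_{1/2}(qt₁) G(t₂) + q^{1/2} t₁ t₂ G(t₁t₂) has at most one symmetric solution with coefficients in ℂ[[q]]. -/
/-!
A difference `c` of two solutions is symmetric and solves the homogeneous equation
`q^m c_{m,l} = -c_{m-1,l-1}`. Exchanging `m` and `l` gives `q^m c_{m,l} = q^l c_{m,l}`, so `c` is
supported on the diagonal. There `c_{m-1,m-1} = -q^m c_{m,m}`: one step to the left shifts the
`q`-expansion by `m`, so `c_{m,m}` with `m ≥ 0` inherits from `c_{m+n,m+n}` a vanishing order at
least `n` larger than the uniform bound. Hence `c_{m,m} = 0` for `m ≥ 0`, and the recursion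
propagates this to negative `m`.
-/

theorem coeff_coe_powerSeries_eq_zero_of_neg {R : Type*} [Semiring R] (f : PowerSeries R) (k : ℤ)
    (hk : k < 0) : (f : LaurentSeries R).coeff k = 0 := by
  rw [PowerSeries.coeff_coe, if_pos hk]

section

variable {R : Type*} [Ring R]

theorem eq_zero_of_single_mul_eq_single_mul_s14 {m l : ℤ} (hml : m ≠ l) {x : LaurentSeries R}
    (h : HahnSeries.single m (1 : R) * x = HahnSeries.single l (1 : R) * x) : x = 0 := by
  by_contra hx
  have horder : m + x.order = l + x.order := by
    rw [← HahnSeries.order_single_mul_of_isRegular isRegular_one hx, h,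
      HahnSeries.order_single_mul_of_isRegular isRegular_one hx]
  exact hml (add_right_cancel horder)

section DiagonalRecursion

variable {d : ℤ → LaurentSeries R} {N : ℤ}

theorem coeff_eq_neg_coeff_succ_of_single_mul_eq_neg_pred
    (hd : ∀ m, HahnSeries.single m (1 : R) * d m = -d (m - 1)) (m k : ℤ) :
    (d m).coeff k = -(d (m + 1)).coeff (k - (m + 1)) := by
  have hcoeff := congrArg (fun x ↦ HahnSeries.coeff x k) (hd (m + 1))
  simp only [HahnSeries.coeff_single_mul, one_mul, HahnSeries.coeff_neg,
    add_sub_cancel_right] at hcoeff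
  rw [hcoeff, neg_neg]

theorem coeff_eq_zero_of_single_mul_eq_neg_pred
    (hN : ∀ m, 0 ≤ m → ∀ k < N, (d m).coeff k = 0)
    (hd : ∀ m, HahnSeries.single m (1 : R) * d m = -d (m - 1)) (n : ℕ) :
    ∀ m, 0 ≤ m → ∀ k < N + n, (d m).coeff k = 0 := by
  induction n with
  | zero => simpa using hN
  | succ n ih =>
    intro m hm k hk
    rw [coeff_eq_neg_coeff_succ_of_single_mul_eq_neg_pred hd, ih (m + 1) (by lia) _ (by lia),
      neg_zero]

theorem eq_zero_of_single_mul_eq_neg_pred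
    (hN : ∀ m, 0 ≤ m → ∀ k < N, (d m).coeff k = 0)
    (hd : ∀ m, HahnSeries.single m (1 : R) * d m = -d (m - 1)) (m : ℤ) : d m = 0 := by
  have eq_zero_of_nonneg : ∀ m, 0 ≤ m → d m = 0 := by
    intro m hm
    ext k
    exact coeff_eq_zero_of_single_mul_eq_neg_pred hN hd (k - N + 1).toNat m hm k (by lia)
  have pred_eq_zero : ∀ m, d m = 0 → d (m - 1) = 0 := by
    intro m hm
    rw [← neg_eq_zero, ← hd, hm, mul_zero]
  obtain hm | hm := le_total 0 m
  · exact eq_zero_of_nonneg m hm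
  · exact Int.leInductionDown (eq_zero_of_nonneg 0 le_rfl) (fun m _ ↦ pred_eq_zero m) m hm

end DiagonalRecursion

/-- The operator `F ↦ F(qt₁, t₂) + q^{1/2} t₁ t₂ F` of the 2-point equation, on a formal series
encoded by its coefficients: `F m l` is the coefficient of `t₁^{m+1/2} t₂^{l+1/2}`. The output
coefficients are divided by `q^{1/2}`, which leaves only integral powers of `q`. -/
noncomputable def twoPointOperator :
    (ℤ → ℤ → LaurentSeries R) →+ (ℤ → ℤ → LaurentSeries R) where
  toFun F m l := HahnSeries.single m 1 * F m l + F (m - 1) (l - 1)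
  map_zero' := by ext; simp
  map_add' F G := by
    ext1 m; ext1 l
    simp only [Pi.add_apply, mul_add]
    abel

theorem single_mul_eq_neg_of_twoPointOperator_eq_zero {c : ℤ → ℤ → LaurentSeries R}
    (hc : twoPointOperator c = 0) (m l : ℤ) :
    HahnSeries.single m 1 * c m l = -c (m - 1) (l - 1) :=
  eq_neg_of_add_eq_zero_left (congrFun₂ hc m l)

theorem eq_zero_of_twoPointOperator_eq_zero {c : ℤ → ℤ → LaurentSeries R} {N : ℤ}
    (hN : ∀ m, 0 ≤ m → ∀ k < N, (c m m).coeff k = 0) (hsym : ∀ m l, c m l = c l m)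
    (hc : twoPointOperator c = 0) : c = 0 := by
  have hrec := single_mul_eq_neg_of_twoPointOperator_eq_zero hc
  ext1 m; ext1 l
  obtain rfl | hml := eq_or_ne m l
  · exact eq_zero_of_single_mul_eq_neg_pred hN (fun m ↦ hrec m m) m
  · refine eq_zero_of_single_mul_eq_single_mul_s14 hml ?_
    calc HahnSeries.single m 1 * c m l
        = -c (m - 1) (l - 1) := hrec m l
      _ = -c (l - 1) (m - 1) := by rw [hsym]
      _ = HahnSeries.single l 1 * c l m := (hrec l m).symm
      _ = HahnSeries.single l 1 * c m l := by rw [hsym]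

theorem stmt14_general {a a' : ℤ → ℤ → LaurentSeries R} {N : ℤ}
    (hN : ∀ m, 0 ≤ m → ∀ k < N, (a m m).coeff k = 0)
    (hN' : ∀ m, 0 ≤ m → ∀ k < N, (a' m m).coeff k = 0)
    (hsym : ∀ m l, a m l = a l m) (hsym' : ∀ m l, a' m l = a' l m)
    (h : twoPointOperator a = twoPointOperator a') : a = a' := by
  refine sub_eq_zero.mp (eq_zero_of_twoPointOperator_eq_zero (N := N) ?_ ?_ ?_)
  · intro m hm k hk
    simp only [Pi.sub_apply, HahnSeries.coeff_sub, hN m hm k hk, hN' m hm k hk, sub_zero]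
  · intro m l
    simp only [Pi.sub_apply, hsym m l, hsym' m l]
  · rw [map_sub, h, sub_self]

end

/-- **Uniqueness for the symmetric inhomogeneous 2-point `q`-difference equation.**
Two formal series `F = ∑ a_{m,l} t₁^{m+1/2} t₂^{l+1/2}`, `F' = ∑ a'_{m,l} t₁^{m+1/2} t₂^{l+1/2}`
with coefficients in `ℂ[[q]]`, both symmetric and both satisfying
`F(qt₁,t₂) + q^{1/2} t₁ t₂ F(t₁,t₂) = B` (coefficientwise:
`q^m a_{m,l} + a_{m-1,l-1} = B_{m,l}` in `ℂ((q))`), coincide.  In particular the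
Bloch–Okounkov 2-point equation has at most one symmetric solution with coefficients in
`ℂ[[q]]`. -/
theorem stmt14 (B : ℤ → ℤ → LaurentSeries ℂ)
    (a a' : ℤ → ℤ → PowerSeries ℂ)
    (hsym : ∀ m l : ℤ, a m l = a l m)
    (hsym' : ∀ m l : ℤ, a' m l = a' l m)
    (ha : ∀ m l : ℤ,
      (HahnSeries.single m (1 : ℂ) : LaurentSeries ℂ) * ((a m l : LaurentSeries ℂ))
          + ((a (m - 1) (l - 1) : LaurentSeries ℂ)) = B m l)
    (ha' : ∀ m l : ℤ,
      (HahnSeries.single m (1 : ℂ) : LaurentSeries ℂ) * ((a' m l : LaurentSeries ℂ))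
          + ((a' (m - 1) (l - 1) : LaurentSeries ℂ)) = B m l) :
    ∀ m l : ℤ, a m l = a' m l := by
  have heq := stmt14_general (fun m _ ↦ coeff_coe_powerSeries_eq_zero_of_neg (a m m))
    (fun m _ ↦ coeff_coe_powerSeries_eq_zero_of_neg (a' m m)) (fun m l ↦ congrArg _ (hsym m l))
    (fun m l ↦ congrArg _ (hsym' m l)) (funext₂ fun m l ↦ (ha m l).trans (ha' m l).symm)
  exact fun m l ↦ HahnSeries.ofPowerSeries_injective (congrFun₂ heq m l)
end

section
/- Let k, l ∈ ℤ with k ≠ l. The double series A_{k,l} = ∑_{m,n≥0} (−1)^{m+n} q^{(n+m+1)(n+m+2)/2 − k(m+1) − l(n+1)} is a well-defined formal Laurent series in q (for each integer j only finitely many pairs (m,n) ∈ ℕ² satisfy (n+m+1)(n+m+2)/2 − k(m+1) − l(n+1) = j, and the occurring exponents are bounded below), and it lies in ℤ[[q]]: for every negative integer j, the signed count ∑ { (−1)^{m+n} : (m,n) ∈ ℕ², (n+m+1)(n+m+2)/2 − k(m+1) − l(n+1) = j } equals 0. -/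
/-- The exponent `(n+m+1)(n+m+2)/2 - k(m+1) - l(n+1)` of `q` attached to the lattice point
`(m,n) ∈ ℕ²` in the double series `A_{k,l}`. -/
def Aexp (k l : ℤ) (p : ℕ × ℕ) : ℤ :=
  (((p.2 : ℤ) + (p.1 : ℤ) + 1) * ((p.2 : ℤ) + (p.1 : ℤ) + 2)) / 2 -
    k * ((p.1 : ℤ) + 1) - l * ((p.2 : ℤ) + 1)

/-- The coefficient of `q^j` in
`A_{k,l} = ∑_{m,n≥0} (-1)^{m+n} q^{(n+m+1)(n+m+2)/2 - k(m+1) - l(n+1)}`: the signed count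
of lattice points `(m,n)` with the given exponent. -/
noncomputable def Acoeff (k l j : ℤ) : ℂ :=
  ∑ᶠ p : ℕ × ℕ, if Aexp k l p = j then (-1 : ℂ) ^ (p.1 + p.2) else 0

/-!
Put `a = m + 1`, `b = n + 1`, `s = a + b`. Twice the exponent is `s(s - (2k + 1)) + 2(k - l)b`, so
for fixed `b` the reflection `s ↦ 2k + 1 - s` preserves the exponent and reverses the sign
`(-1)^s`. Where `(k - l)b ≥ 0` and the exponent is negative, `0 < s` forces `s < 2k + 1`, hence the
reflection preserves `0 < s`, and the points with `0 < s` cancel in pairs. Take `l < k`, as the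
symmetry `(k, l, a, b) ↔ (l, k, b, a)` permits. The quadrant `a, b > 0` is the region `b > 0`,
`s > 0` without the region `a ≤ 0`, `s > 0`; the first cancels by the reflection fixing `b`, the
second by the one fixing `a`.
-/

theorem finsum_mem_eq_zero_of_involutive {α G : Type*} [AddCommGroup G] [IsAddTorsionFree G]
    {s : Set α} {f : α → G} {σ : α → α} (hσ : Function.Involutive σ) (hs : Set.MapsTo σ s s)
    (hf : ∀ x ∈ s, f (σ x) = -f x) : ∑ᶠ x ∈ s, f x = 0 := by
  have hbij : Set.BijOn σ s s :=
    Set.InvOn.bijOn ⟨hσ.leftInverse.leftInvOn s, hσ.rightInverse.rightInvOn s⟩ hs hs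
  have sum_neg : ∑ᶠ x ∈ s, -f x = ∑ᶠ x ∈ s, f x :=
    finsum_mem_eq_of_bijOn σ hbij fun x hx => (hf x hx).symm
  have neg_sum : ∑ᶠ x ∈ s, -f x = -∑ᶠ x ∈ s, f x := by
    simp only [← finsum_neg_distrib]
  exact self_eq_neg.mp (sum_neg.symm.trans neg_sum)

theorem two_mul_Aexp (k l : ℤ) (p : ℕ × ℕ) :
    2 * Aexp k l p = ((p.2 : ℤ) + p.1 + 1) * ((p.2 : ℤ) + p.1 + 2) -
      2 * k * (p.1 + 1) - 2 * l * (p.2 + 1) := by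
  have two_dvd_mul : (2 : ℤ) ∣ ((p.2 : ℤ) + p.1 + 1) * ((p.2 : ℤ) + p.1 + 2) := by
    simpa only [add_assoc, one_add_one_eq_two]
      using (Int.even_mul_succ_self ((p.2 : ℤ) + p.1 + 1)).two_dvd
  unfold Aexp
  linear_combination Int.mul_ediv_cancel' two_dvd_mul

theorem add_sub_sq_le_Aexp (k l : ℤ) (p : ℕ × ℕ) :
    (p.1 + p.2 : ℤ) - (2 * max k l + 3) ^ 2 ≤ Aexp k l p := by
  have hk : k * (p.1 + 1) ≤ max k l * (p.1 + 1) :=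
    mul_le_mul_of_nonneg_right (le_max_left k l) (by positivity)
  have hl : l * (p.2 + 1) ≤ max k l * (p.2 + 1) :=
    mul_le_mul_of_nonneg_right (le_max_right k l) (by positivity)
  have quadratic_le : ((p.1 : ℤ) + p.2 + 2) * (p.1 + p.2 + 1 - 2 * max k l) ≤ 2 * Aexp k l p := by
    linarith [two_mul_Aexp k l p]
  nlinarith [sq_nonneg (2 * ((p.1 : ℤ) + p.2 + 2) - (2 * max k l + 3)),
    sq_nonneg (2 * max k l + 3)]

theorem finite_setOf_Aexp_eq (k l j : ℤ) : {p : ℕ × ℕ | Aexp k l p = j}.Finite := by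
  set N := (j + (2 * max k l + 3) ^ 2).toNat
  refine (Set.finite_Iic (N, N)).subset fun p (hp : Aexp k l p = j) => ?_
  have hle := add_sub_sq_le_Aexp k l p
  rw [Set.mem_Iic, Prod.le_def]
  constructor <;> dsimp only <;> omega

/-- Twice the exponent of `q`, as a polynomial in `(a, b) = (m + 1, n + 1)`; the factor `2` avoids
integer division. -/
def doubledExp (k l : ℤ) (p : ℤ × ℤ) : ℤ :=
  (p.1 + p.2) * (p.1 + p.2 - 1) - 2 * k * p.1 - 2 * l * p.2

/-- The lattice points `(a, b)` of the region `U` at which the exponent of `q` is `j`. -/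
def expFiber (k l j : ℤ) (U : Set (ℤ × ℤ)) : Set (ℤ × ℤ) :=
  {p ∈ U | doubledExp k l p = 2 * j}

/-- The coefficient of `q ^ j` contributed by the lattice points `(a, b)` of the region `U`. It
takes the junk value `0` if infinitely many points of `U` have exponent `j`. -/
noncomputable def signedCount (k l j : ℤ) (U : Set (ℤ × ℤ)) : ℤ :=
  ∑ᶠ p ∈ expFiber k l j U, ((p.1 + p.2).negOnePow : ℤ)

/-- The open quadrant `a, b > 0`, over which the series `A_{k,l}` is summed. -/
def positiveQuadrant : Set (ℤ × ℤ) := {p | 0 < p.1 ∧ 0 < p.2}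

/-- The part of the half-plane `a + b > 0` with `b ∈ B`. If `(k - l) b ≥ 0` on `B`, then
`reflectFst k` permutes its points of any given negative exponent. -/
def halfPlaneOver (B : Set ℤ) : Set (ℤ × ℤ) := {p | 0 < p.1 + p.2 ∧ p.2 ∈ B}

/-- The reflection `a + b ↦ 2k + 1 - (a + b)` at fixed `b`, which preserves exponents and reverses
signs. -/
def reflectFst (k : ℤ) (p : ℤ × ℤ) : ℤ × ℤ := (2 * k + 1 - p.1 - 2 * p.2, p.2)

section Reflection

variable {k l j : ℤ} {B : Set ℤ}

theorem reflectFst_involutive (k : ℤ) : Function.Involutive (reflectFst k) := fun p =>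
  Prod.ext (by simp only [reflectFst]; ring) rfl

theorem reflectFst_fst_add_snd (k : ℤ) (p : ℤ × ℤ) :
    (reflectFst k p).1 + (reflectFst k p).2 = 2 * k + 1 - (p.1 + p.2) := by
  simp only [reflectFst]
  ring

theorem doubledExp_reflectFst (k l : ℤ) (p : ℤ × ℤ) :
    doubledExp k l (reflectFst k p) = doubledExp k l p := by
  simp only [doubledExp, reflectFst]
  ring

theorem negOnePow_reflectFst (k : ℤ) (p : ℤ × ℤ) :
    ((reflectFst k p).1 + (reflectFst k p).2).negOnePow = -(p.1 + p.2).negOnePow := by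
  rw [reflectFst_fst_add_snd, Int.negOnePow_sub, Int.negOnePow_two_mul_add_one, neg_one_mul]

theorem doubledExp_eq_mul_add (k l : ℤ) (p : ℤ × ℤ) :
    doubledExp k l p = (p.1 + p.2) * (p.1 + p.2 - (2 * k + 1)) + 2 * ((k - l) * p.2) := by
  unfold doubledExp
  ring

theorem fst_add_snd_lt_of_mem_expFiber_halfPlaneOver (hj : j < 0)
    (hB : ∀ b ∈ B, 0 ≤ (k - l) * b) {p : ℤ × ℤ} (hp : p ∈ expFiber k l j (halfPlaneOver B)) :
    p.1 + p.2 < 2 * k + 1 := by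
  obtain ⟨⟨hpos, hmem⟩, hexp⟩ := hp
  rw [doubledExp_eq_mul_add] at hexp
  have hneg : (p.1 + p.2) * (p.1 + p.2 - (2 * k + 1)) < 0 := by linarith [hB p.2 hmem]
  linarith [neg_of_mul_neg_right hneg hpos.le]

theorem mapsTo_reflectFst_expFiber (hj : j < 0) (hB : ∀ b ∈ B, 0 ≤ (k - l) * b) :
    Set.MapsTo (reflectFst k) (expFiber k l j (halfPlaneOver B))
      (expFiber k l j (halfPlaneOver B)) := by
  intro p hp
  have hlt := fst_add_snd_lt_of_mem_expFiber_halfPlaneOver hj hB hp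
  refine ⟨⟨?_, hp.1.2⟩, (doubledExp_reflectFst k l p).trans hp.2⟩
  rw [reflectFst_fst_add_snd]
  linarith

theorem signedCount_halfPlaneOver_eq_zero (hj : j < 0) (hB : ∀ b ∈ B, 0 ≤ (k - l) * b) :
    signedCount k l j (halfPlaneOver B) = 0 :=
  finsum_mem_eq_zero_of_involutive (reflectFst_involutive k) (mapsTo_reflectFst_expFiber hj hB)
    fun p _ => by rw [negOnePow_reflectFst, Units.val_neg]

theorem finite_expFiber_halfPlaneOver (hkl : k ≠ l) (hj : j < 0)
    (hB : ∀ b ∈ B, 0 ≤ (k - l) * b) : (expFiber k l j (halfPlaneOver B)).Finite := by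
  refine Set.Finite.of_injOn (f := fun p => p.1 + p.2) (t := Set.Ioo 0 (2 * k + 1))
    (fun p hp => ⟨hp.1.1, fst_add_snd_lt_of_mem_expFiber_halfPlaneOver hj hB hp⟩) ?_
    (Set.finite_Ioo _ _)
  intro p hp p' hp' (hsum : p.1 + p.2 = p'.1 + p'.2)
  have hexp : doubledExp k l p = doubledExp k l p' := hp.2.trans hp'.2.symm
  rw [doubledExp_eq_mul_add, doubledExp_eq_mul_add, hsum] at hexp
  have hsnd : p.2 = p'.2 := mul_left_cancel₀ (sub_ne_zero.mpr hkl) (by linarith)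
  exact Prod.ext (by linarith) hsnd

end Reflection

theorem doubledExp_swap (k l : ℤ) (p : ℤ × ℤ) : doubledExp k l p.swap = doubledExp l k p := by
  simp only [doubledExp, Prod.fst_swap, Prod.snd_swap]
  ring

theorem signedCount_preimage_swap (k l j : ℤ) (U : Set (ℤ × ℤ)) :
    signedCount k l j (Prod.swap ⁻¹' U) = signedCount l k j U := by
  refine finsum_mem_eq_of_bijOn Prod.swap (Set.InvOn.bijOn (f' := Prod.swap)
    ⟨fun p _ => p.swap_swap, fun p _ => p.swap_swap⟩ (fun p hp => ?_) fun p hp => ?_) fun p _ => ?_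
  · exact ⟨hp.1, (doubledExp_swap l k p).trans hp.2⟩
  · exact ⟨hp.1, (doubledExp_swap k l p).trans hp.2⟩
  · rw [Prod.fst_swap, Prod.snd_swap, add_comm]

theorem signedCount_add_sdiff {k l j : ℤ} {U V : Set (ℤ × ℤ)} (hUV : U ⊆ V)
    (hV : (expFiber k l j V).Finite) :
    signedCount k l j U + signedCount k l j (V \ U) = signedCount k l j V := by
  have hsub : expFiber k l j U ⊆ expFiber k l j V := fun p hp => ⟨hUV hp.1, hp.2⟩
  have hsdiff : expFiber k l j (V \ U) = expFiber k l j V \ expFiber k l j U := by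
    ext p
    simp only [expFiber, Set.mem_sdiff, Set.mem_ofPred_eq]
    tauto
  unfold signedCount
  rw [hsdiff, finsum_mem_add_sdiff hsub hV]

theorem positiveQuadrant_subset_halfPlaneOver_Ioi :
    positiveQuadrant ⊆ halfPlaneOver (Set.Ioi 0) := fun _ hp => ⟨add_pos hp.1 hp.2, hp.2⟩

theorem halfPlaneOver_Ioi_sdiff_positiveQuadrant :
    halfPlaneOver (Set.Ioi 0) \ positiveQuadrant = Prod.swap ⁻¹' halfPlaneOver (Set.Iic 0) := by
  ext p
  simp only [halfPlaneOver, positiveQuadrant, Set.mem_sdiff, Set.mem_preimage, Set.mem_ofPred_eq,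
    Set.mem_Ioi, Set.mem_Iic, Prod.fst_swap, Prod.snd_swap]
  omega

theorem signedCount_positiveQuadrant_comm (k l j : ℤ) :
    signedCount k l j positiveQuadrant = signedCount l k j positiveQuadrant := by
  have hswap : Prod.swap ⁻¹' positiveQuadrant = positiveQuadrant := Set.ext fun _ => and_comm
  rw [← signedCount_preimage_swap, hswap]

theorem signedCount_positiveQuadrant_eq_zero {k l j : ℤ} (hkl : k ≠ l) (hj : j < 0) :
    signedCount k l j positiveQuadrant = 0 := by
  wlog hlt : l < k generalizing k l
  · rw [signedCount_positiveQuadrant_comm]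
    exact this hkl.symm (hkl.lt_of_le (not_lt.mp hlt))
  have hIoi : ∀ b ∈ Set.Ioi (0 : ℤ), 0 ≤ (k - l) * b := fun b hb =>
    mul_nonneg (sub_nonneg.mpr hlt.le) (Set.mem_Ioi.mp hb).le
  have hIic : ∀ a ∈ Set.Iic (0 : ℤ), 0 ≤ (l - k) * a := fun a ha =>
    mul_nonneg_of_nonpos_of_nonpos (sub_nonpos.mpr hlt.le) ha
  have hsplit := signedCount_add_sdiff positiveQuadrant_subset_halfPlaneOver_Ioi
    (finite_expFiber_halfPlaneOver hkl hj hIoi)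
  rwa [halfPlaneOver_Ioi_sdiff_positiveQuadrant, signedCount_preimage_swap,
    signedCount_halfPlaneOver_eq_zero hj hIic, signedCount_halfPlaneOver_eq_zero hj hIoi,
    add_zero] at hsplit

theorem doubledExp_add_one (k l : ℤ) (p : ℕ × ℕ) :
    doubledExp k l ((p.1 : ℤ) + 1, (p.2 : ℤ) + 1) = 2 * Aexp k l p := by
  rw [two_mul_Aexp, doubledExp]
  ring

theorem bijOn_expFiber_positiveQuadrant (k l j : ℤ) :
    Set.BijOn (fun p : ℕ × ℕ => ((p.1 : ℤ) + 1, (p.2 : ℤ) + 1)) {p | Aexp k l p = j}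
      (expFiber k l j positiveQuadrant) := by
  refine ⟨fun p hp => ⟨⟨by positivity, by positivity⟩, ?_⟩, fun p _ p' _ h => ?_, ?_⟩
  · rw [doubledExp_add_one, show Aexp k l p = j from hp]
  · simpa [Prod.ext_iff] using h
  · rintro ⟨a, b⟩ ⟨⟨ha, hb⟩, hexp⟩
    obtain ⟨m, rfl⟩ := Int.eq_succ_of_zero_lt ha
    obtain ⟨n, rfl⟩ := Int.eq_succ_of_zero_lt hb
    refine ⟨(m, n), ?_, by simp⟩
    exact mul_left_cancel₀ two_ne_zero ((doubledExp_add_one k l (m, n)).symm.trans hexp)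

theorem Acoeff_eq_signedCount (k l j : ℤ) :
    Acoeff k l j = (signedCount k l j positiveQuadrant : ℂ) := by
  have sign_eq (p : ℕ × ℕ) :
      (((((p.1 : ℤ) + 1) + ((p.2 : ℤ) + 1)).negOnePow : ℤ) : ℂ) = (-1) ^ (p.1 + p.2) := by
    rw [show (p.1 : ℤ) + 1 + (p.2 + 1) = (p.1 + p.2 : ℕ) + 2 * 1 by push_cast; ring,
      Int.negOnePow_add, Int.negOnePow_two_mul, mul_one, Int.cast_negOnePow_natCast]
  calc Acoeff k l j = ∑ᶠ p ∈ {p | Aexp k l p = j}, (-1 : ℂ) ^ (p.1 + p.2) :=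
        finsum_congr fun p => finsum_eq_if.symm
    _ = ∑ᶠ p ∈ expFiber k l j positiveQuadrant, (((p.1 + p.2).negOnePow : ℤ) : ℂ) :=
        finsum_mem_eq_of_bijOn _ (bijOn_expFiber_positiveQuadrant k l j) fun p _ =>
          (sign_eq p).symm
    _ = (signedCount k l j positiveQuadrant : ℂ) :=
        ((Int.castAddHom ℂ).map_finsum_mem _ <|
          (bijOn_expFiber_positiveQuadrant k l j).finite_iff_finite.mp
            (finite_setOf_Aexp_eq k l j)).symm

/-- **Integrality of the 2-point coefficients** (formula (3.47) of the paper).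
For `k ≠ l` the double series `A_{k,l}` is a well-defined formal Laurent series in `q`
(each exponent is attained by only finitely many lattice points and the exponents are
bounded below), and it lies in `ℤ[[q]]`: for every negative `j` the signed count of
lattice points with exponent `j` vanishes, and every coefficient is an integer. -/
theorem stmt15 (k l : ℤ) (hkl : k ≠ l) :
    (∀ j : ℤ, {p : ℕ × ℕ | Aexp k l p = j}.Finite) ∧
    (∃ j₀ : ℤ, ∀ p : ℕ × ℕ, j₀ ≤ Aexp k l p) ∧
    (∀ j : ℤ, j < 0 → Acoeff k l j = 0) ∧
    (∀ j : ℤ, ∃ z : ℤ, Acoeff k l j = (z : ℂ)) := by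
  refine ⟨finite_setOf_Aexp_eq k l, ⟨-(2 * max k l + 3) ^ 2, fun p => ?_⟩, fun j hj => ?_,
    fun j => ⟨_, Acoeff_eq_signedCount k l j⟩⟩
  · linarith [add_sub_sq_le_Aexp k l p]
  · rw [Acoeff_eq_signedCount, signedCount_positiveQuadrant_eq_zero hkl hj, Int.cast_zero]
end
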